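/- arXiv:1406.3327 — 4 statements merged into one kernel-verified Lean document; each statement's English description precedes it below -/
import Mathlib

section
/- The adaptive Boston mechanism is partially strategyproof: for every setting (N, M, q) there exists r ∈ (0,1] such that ABM is r-partially strategyproof in that setting. -/
/-!
Fix an agent `i`, the reports of the others, and compare a truthful report of `i` with a misreport.

For a fixed priority ordering `π`, both runs of the mechanism agree up to the first round in which
`i` is still unassigned and applies to different objects, `c` under the truth and `c' ≠ c` under
the misreport.  All objects that `i` prefers to `c` are exhausted by then, so neither report can
yield them.  If the misreport eventually yields `c`, then `c` survives that round, hence is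
available when `i` applies truthfully, and the truth yields `c` too.  So whenever the misreport
yields an object `b` that the truth does not yield, `b` is strictly worse than `c`.  Moreover
there is an ordering `π'` for which the truth yields `c` and the misreport does not: place the
agents served before the diverging round first (in the order of `π`), then `i`, then everybody else.
This changes nothing in the earlier rounds (`iterate_reorder`), and in the diverging round `i`
applies first.  This is `exists_better_order`.

Consequently, at the best object (in the true ranking of `i`) whose assignment to `i` depends on the
report for some ordering, the truth wins for strictly more orderings (`winCount_lex`).  Since
every agent is always served (`ABMassign_ne_none`), the numbers of orderings sum to `n!` for both
reports, and with `r = 1 / n!` a utility satisfying URBI(`r`) values one additional ordering at this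
object at least as much as everything that can be lost at worse objects.
-/

open Finset

/-- A preference type (strict ranking of the `m` objects): `t k` is the object
ranked `k`-th (0-indexed).  Object `a` is preferred to `b` iff
`t.symm a < t.symm b`. -/
abbrev Pref (m : ℕ) := Fin m ≃ Fin m

/-- One round of a Boston-style mechanism: the agents in `order` (highest priority
first) that are not yet assigned apply to `choice i`; an applicant receives a copy
iff the remaining capacity of its chosen object is still positive. -/
def applyRound {n m : ℕ} (choice : Fin n → Option (Fin m)) (order : List (Fin n))
    (st : (Fin n → Option (Fin m)) × (Fin m → ℕ)) :
    (Fin n → Option (Fin m)) × (Fin m → ℕ) :=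
  order.foldl
    (fun s i =>
      match s.1 i with
      | some _ => s
      | none =>
        match choice i with
        | none => s
        | some j =>
          if 0 < s.2 j then
            (Function.update s.1 i (some j), Function.update s.2 j (s.2 j - 1))
          else s)
    st

/-- The list of agents in order of priority under `π` (the agent with `π i = 0` first). -/
def priorityList {n : ℕ} (π : Equiv.Perm (Fin n)) : List (Fin n) :=
  (List.finRange n).map π.symm

/-- The most preferred object (under `ti`) among the objects with positive
remaining capacity, if any such object exists. -/
def favorite {m : ℕ} (ti : Pref m) (cap : Fin m → ℕ) : Option (Fin m) :=
  ((List.finRange m).find? (fun k => decide (0 < cap (ti k)))).map ti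

/-- The naïve Boston mechanism for a fixed priority ordering `π`: in round `k`
every not-yet-assigned agent applies to its `k`-th ranked object. -/
def NBMassign {n m : ℕ} (q : Fin m → ℕ) (t : Fin n → Pref m) (π : Equiv.Perm (Fin n)) :
    Fin n → Option (Fin m) :=
  ((List.finRange m).foldl
    (fun st k => applyRound (fun i => some (t i k)) (priorityList π) st)
    ((fun _ => none), q)).1

/-- The adaptive Boston mechanism for a fixed priority ordering `π`: in every round
each not-yet-assigned agent applies to its most preferred object among the objects
with strictly positive remaining capacity (at the beginning of the round). -/
def ABMassign {n m : ℕ} (q : Fin m → ℕ) (t : Fin n → Pref m) (π : Equiv.Perm (Fin n)) :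
    Fin n → Option (Fin m) :=
  ((fun st => applyRound (fun i => favorite (t i) st.2) (priorityList π) st)^[n]
    ((fun _ => none), q)).1

/-- The serial dictatorship for a fixed priority ordering `π`: agents are processed
in order of priority, each receiving one copy of its most preferred object among
those with remaining capacity. -/
def SDassign {n m : ℕ} (q : Fin m → ℕ) (t : Fin n → Pref m) (π : Equiv.Perm (Fin n)) :
    Fin n → Option (Fin m) :=
  ((priorityList π).foldl
    (fun s i =>
      match favorite (t i) s.2 with
      | none => s
      | some j => (Function.update s.1 i (some j), Function.update s.2 j (s.2 j - 1)))
    ((fun _ => none), q)).1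

/-- The (deterministic) allocation matrix induced by an assignment of objects to agents. -/
def detAlloc {n m : ℕ} (a : Fin n → Option (Fin m)) : Fin n → Fin m → ℝ :=
  fun i j => if a i = some j then 1 else 0

/-- The naïve Boston mechanism: the average of `NBMassign` over all `n!` priority orderings. -/
noncomputable def NBM {n m : ℕ} (q : Fin m → ℕ) (t : Fin n → Pref m) : Fin n → Fin m → ℝ :=
  fun i j => (∑ π : Equiv.Perm (Fin n), detAlloc (NBMassign q t π) i j) / (Nat.factorial n)

/-- The adaptive Boston mechanism: the average of `ABMassign` over all `n!` priority orderings. -/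
noncomputable def ABM {n m : ℕ} (q : Fin m → ℕ) (t : Fin n → Pref m) : Fin n → Fin m → ℝ :=
  fun i j => (∑ π : Equiv.Perm (Fin n), detAlloc (ABMassign q t π) i j) / (Nat.factorial n)

/-- Random serial dictatorship: the average of `SDassign` over all `n!` priority orderings. -/
noncomputable def RSD {n m : ℕ} (q : Fin m → ℕ) (t : Fin n → Pref m) : Fin n → Fin m → ℝ :=
  fun i j => (∑ π : Equiv.Perm (Fin n), detAlloc (SDassign q t π) i j) / (Nat.factorial n)

/-- `x` is an allocation for capacities `q`. -/
def IsAlloc {n m : ℕ} (q : Fin m → ℕ) (x : Fin n → Fin m → ℝ) : Prop :=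
  (∀ i j, 0 ≤ x i j ∧ x i j ≤ 1) ∧ (∀ i, ∑ j, x i j = 1) ∧ ∀ j, ∑ i, x i j ≤ q j

/-- First-order stochastic dominance of `v` over `w` with respect to the ranking `ti`. -/
def FOSD {m : ℕ} (ti : Pref m) (v w : Fin m → ℝ) : Prop :=
  ∀ K : Fin m, ∑ k ∈ Finset.Iic K, w (ti k) ≤ ∑ k ∈ Finset.Iic K, v (ti k)

/-- Strict first-order stochastic dominance. -/
def StrictFOSD {m : ℕ} (ti : Pref m) (v w : Fin m → ℝ) : Prop :=
  FOSD ti v w ∧ ∃ K : Fin m, ∑ k ∈ Finset.Iic K, w (ti k) < ∑ k ∈ Finset.Iic K, v (ti k)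

/-- `x` ordinally dominates `y` at type profile `t`. -/
def OrdDom {n m : ℕ} (t : Fin n → Pref m) (x y : Fin n → Fin m → ℝ) : Prop :=
  ∀ i, FOSD (t i) (x i) (y i)

/-- `x` strictly ordinally dominates `y` at type profile `t`. -/
def StrictOrdDom {n m : ℕ} (t : Fin n → Pref m) (x y : Fin n → Fin m → ℝ) : Prop :=
  OrdDom t x y ∧ ∃ i : Fin n, ∃ K : Fin m,
    ∑ k ∈ Finset.Iic K, y i (t i k) < ∑ k ∈ Finset.Iic K, x i (t i k)

/-- The rank distribution of allocation `x` at profile `t`: `rankDist t x k` is the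
expected number of `k`-th (0-indexed) choices allocated. -/
noncomputable def rankDist {n m : ℕ} (t : Fin n → Pref m) (x : Fin n → Fin m → ℝ)
    (k : Fin m) : ℝ :=
  ∑ i, x i (t i k)

/-- `x` weakly rank dominates `y` at profile `t`. -/
def WeakRankDom {n m : ℕ} (t : Fin n → Pref m) (x y : Fin n → Fin m → ℝ) : Prop :=
  ∀ K : Fin m, ∑ k ∈ Finset.Iic K, rankDist t y k ≤ ∑ k ∈ Finset.Iic K, rankDist t x k

/-- `x` strictly rank dominates `y` at profile `t`. -/
def StrictRankDom {n m : ℕ} (t : Fin n → Pref m) (x y : Fin n → Fin m → ℝ) : Prop :=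
  WeakRankDom t x y ∧ ∃ K : Fin m,
    ∑ k ∈ Finset.Iic K, rankDist t y k < ∑ k ∈ Finset.Iic K, rankDist t x k

/-- Feasibility of a deterministic (total) assignment. -/
def Feasible {n m : ℕ} (q : Fin m → ℕ) (y : Fin n → Fin m) : Prop :=
  ∀ j, (Finset.univ.filter fun i => y i = j).card ≤ q j

/-- Ex-post efficiency at `t` of a deterministic assignment `a`: no feasible
deterministic assignment makes every agent weakly better off and some agent
strictly better off. -/
def ExPostEfficientAt {n m : ℕ} (q : Fin m → ℕ) (t : Fin n → Pref m)
    (a : Fin n → Option (Fin m)) : Prop :=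
  ¬ ∃ y : Fin n → Fin m, Feasible q y ∧
      (∀ i j, a i = some j → (t i).symm (y i) ≤ (t i).symm j) ∧
      ∃ i j, a i = some j ∧ (t i).symm (y i) < (t i).symm j

/-- The expected number of allocated first choices under `x` at profile `t`. -/
noncomputable def d1 {n m : ℕ} (t : Fin n → Pref m) (x : Fin n → Fin m → ℝ) : ℝ :=
  ∑ i, ∑ j, if ((t i).symm j : ℕ) = 0 then x i j else 0

/-- `x` is first-choice-maximizing at profile `t`. -/
def FirstChoiceMax {n m : ℕ} (q : Fin m → ℕ) (t : Fin n → Pref m)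
    (x : Fin n → Fin m → ℝ) : Prop :=
  IsAlloc q x ∧ ∀ y : Fin n → Fin m → ℝ, IsAlloc q y → d1 t y ≤ d1 t x

/-- `u` is a vNM utility function consistent with the ranking `ti`. -/
def Consistent {m : ℕ} (ti : Pref m) (u : Fin m → ℝ) : Prop :=
  ∀ a b : Fin m, ti.symm a < ti.symm b → u b < u a

/-- Uniformly relatively bounded indifference with bound `r`. -/
def URBI {m : ℕ} (r : ℝ) (u : Fin m → ℝ) : Prop :=
  ∀ a b : Fin m, u b < u a → u b - (⨅ j, u j) ≤ r * (u a - (⨅ j, u j))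

/-! ### Monotonicity of the assignment process -/

/-- A state of the mechanism: the partial assignment together with the remaining capacities. -/
abbrev MState (n m : ℕ) := (Fin n → Option (Fin m)) × (Fin m → ℕ)

/-- The effect on the state of the single application of agent `a` within a round. -/
def agentStep {n m : ℕ} (ch : Fin n → Option (Fin m)) (s : MState n m) (a : Fin n) :
    MState n m :=
  match s.1 a with
  | some _ => s
  | none =>
    match ch a with
    | none => s
    | some j =>
      if 0 < s.2 j then
        (Function.update s.1 a (some j), Function.update s.2 j (s.2 j - 1))
      else s

/-- One full round of the adaptive Boston mechanism with priority list `l`. -/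
def abmStep {n m : ℕ} (t : Fin n → Pref m) (l : List (Fin n)) (s : MState n m) : MState n m :=
  l.foldl (agentStep (fun a => favorite (t a) s.2)) s

theorem ABMassign_eq {n m : ℕ} (q : Fin m → ℕ) (t : Fin n → Pref m) (π : Equiv.Perm (Fin n)) :
    ABMassign q t π = ((abmStep t (priorityList π))^[n] ((fun _ => none), q)).1 := rfl

theorem agentStep_assigned {n m : ℕ} {ch : Fin n → Option (Fin m)} {s : MState n m} {a : Fin n}
    (h : s.1 a ≠ none) : agentStep ch s a = s := by
  unfold agentStep
  split
  · rfl
  · contradiction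

theorem agentStep_pos {n m : ℕ} {ch : Fin n → Option (Fin m)} {s : MState n m} {a : Fin n}
    {j : Fin m} (h : s.1 a = none) (hc : ch a = some j) (hj : 0 < s.2 j) :
    agentStep ch s a = (Function.update s.1 a (some j), Function.update s.2 j (s.2 j - 1)) := by
  simp [agentStep, h, hc, hj]

theorem agentStep_zero {n m : ℕ} {ch : Fin n → Option (Fin m)} {s : MState n m} {a : Fin n}
    (hc : ∀ j, ch a = some j → s.2 j = 0) : agentStep ch s a = s := by
  unfold agentStep
  split
  · rfl
  · split
    · rfl
    · rename_i j hj
      simp [hc j hj]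

theorem agentStep_cases {n m : ℕ} (ch : Fin n → Option (Fin m)) (s : MState n m) (a : Fin n) :
    agentStep ch s a = s ∨ ∃ j, s.1 a = none ∧ ch a = some j ∧ 0 < s.2 j ∧
      agentStep ch s a =
        (Function.update s.1 a (some j), Function.update s.2 j (s.2 j - 1)) := by
  by_cases h : s.1 a = none
  · by_cases hc : ∀ j, ch a = some j → s.2 j = 0
    · exact Or.inl (agentStep_zero hc)
    · push Not at hc
      obtain ⟨j, hj, hp⟩ := hc
      exact Or.inr ⟨j, h, hj, Nat.pos_of_ne_zero hp,
        agentStep_pos h hj (Nat.pos_of_ne_zero hp)⟩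
  · exact Or.inl (agentStep_assigned h)

/-- `s'` is a possible later state than `s`: capacities have not grown, assignments are
permanent, and every new assignment uses an object that was still available at `s`. -/
def Later {n m : ℕ} (s s' : MState n m) : Prop :=
  (∀ j, s'.2 j ≤ s.2 j) ∧ (∀ a j, s.1 a = some j → s'.1 a = some j) ∧
    ∀ a j, s.1 a = none → s'.1 a = some j → 0 < s.2 j

theorem Later.refl {n m : ℕ} (s : MState n m) : Later s s :=
  ⟨fun _ => le_rfl, fun _ _ h => h, fun a j h h' => by simp [h] at h'⟩

theorem Later.trans {n m : ℕ} {s s' s'' : MState n m} (h : Later s s') (h' : Later s' s'') :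
    Later s s'' := by
  refine ⟨fun j => (h'.1 j).trans (h.1 j), fun a j e => h'.2.1 a j (h.2.1 a j e), ?_⟩
  intro a j e e'
  cases e1 : s'.1 a with
  | none => exact (h'.2.2 a j e1 e').trans_le (h.1 j)
  | some j' =>
    have := h'.2.1 a j' e1
    rw [e'] at this
    cases this
    exact h.2.2 a j e e1

theorem Later.ne_none {n m : ℕ} {s s' : MState n m} (h : Later s s') {a : Fin n}
    (ha : s.1 a ≠ none) : s'.1 a ≠ none := by
  obtain ⟨j, hj⟩ := Option.ne_none_iff_exists'.1 ha
  simp [h.2.1 a j hj]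

theorem later_agentStep {n m : ℕ} (ch : Fin n → Option (Fin m)) (s : MState n m) (a : Fin n) :
    Later s (agentStep ch s a) := by
  rcases agentStep_cases ch s a with h | ⟨j, h, -, hp, e⟩
  · rw [h]; exact Later.refl s
  · rw [e]
    refine ⟨fun k => ?_, fun b k hb => ?_, fun b k hb hb' => ?_⟩
    · by_cases hk : k = j
      · subst hk; simp
      · simp [hk]
    · have : b ≠ a := by rintro rfl; simp [h] at hb
      simpa [this] using hb
    · by_cases hba : b = a
      · subst hba
        simp only [Function.update_self, Option.some.injEq] at hb'
        exact hb' ▸ hp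
      · simp [hba, hb] at hb'

theorem later_foldl {n m : ℕ} (ch : Fin n → Option (Fin m)) (l : List (Fin n))
    (s : MState n m) : Later s (l.foldl (agentStep ch) s) := by
  induction l generalizing s with
  | nil => exact Later.refl s
  | cons a l ih => exact (later_agentStep ch s a).trans (ih _)

theorem later_iterate {n m : ℕ} (t : Fin n → Pref m) (l : List (Fin n)) (k : ℕ)
    (s : MState n m) : Later s ((abmStep t l)^[k] s) := by
  induction k generalizing s with
  | zero => exact Later.refl s
  | succ k ih =>
    rw [Function.iterate_succ_apply]
    exact (later_foldl _ l s).trans (ih _)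

/-! ### Rejected applicants -/

/-- If an agent has applied in a round and is still unassigned at the end, the object it
applied to is exhausted. -/
theorem exhausted_of_rejected {n m : ℕ} {ch : Fin n → Option (Fin m)} {l : List (Fin n)}
    {s : MState n m} {a : Fin n} (ha : a ∈ l) (h : (l.foldl (agentStep ch) s).1 a = none)
    (j : Fin m) (hj : ch a = some j) : (l.foldl (agentStep ch) s).2 j = 0 := by
  induction l generalizing s with
  | nil => simp at ha
  | cons b l ih =>
    rw [List.foldl_cons] at h ⊢
    rcases List.mem_cons.1 ha with rfl | ha
    · have L := later_foldl ch l (agentStep ch s a)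
      have h0 : (agentStep ch s a).1 a = none := by
        by_contra h1
        exact L.ne_none h1 h
      rcases agentStep_cases ch s a with h1 | ⟨j', -, -, -, e⟩
      · rw [h1] at h0 L ⊢
        by_contra h2
        have h3 : 0 < s.2 j := (Nat.pos_of_ne_zero h2).trans_le (L.1 j)
        have := agentStep_pos h0 hj h3
        rw [h1] at this
        rw [this] at h0
        simp at h0
      · rw [e] at h0
        simp at h0
    · exact ih ha h

/-- Dropping agents that are not served in a round does not change the outcome of the round. -/
theorem foldl_filter {n m : ℕ} (ch : Fin n → Option (Fin m)) (P : Fin n → Bool)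
    (l : List (Fin n)) (s : MState n m)
    (hP : ∀ a, (l.foldl (agentStep ch) s).1 a ≠ none → P a = true) :
    (l.filter P).foldl (agentStep ch) s = l.foldl (agentStep ch) s := by
  induction l generalizing s with
  | nil => rfl
  | cons a l ih =>
    rw [List.foldl_cons] at hP ⊢
    by_cases h : P a = true
    · rw [List.filter_cons_of_pos h, List.foldl_cons]
      exact ih _ hP
    · rw [List.filter_cons_of_neg h]
      have h0 : (agentStep ch s a).1 a = none := by
        by_contra h1
        exact h (hP a ((later_foldl ch l _).ne_none h1))
      rcases agentStep_cases ch s a with h1 | ⟨j', -, -, -, e⟩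
      · rw [h1] at hP ⊢
        exact ih _ hP
      · rw [e] at h0
        simp at h0

theorem foldl_eq_self {n m : ℕ} (ch : Fin n → Option (Fin m)) (l : List (Fin n))
    (s : MState n m) (h : ∀ a ∈ l, agentStep ch s a = s) : l.foldl (agentStep ch) s = s := by
  induction l with
  | nil => rfl
  | cons a l ih =>
    rw [List.foldl_cons, h a (by simp)]
    exact ih fun b hb => h b (by simp [hb])

theorem foldl_congr {n m : ℕ} (ch ch' : Fin n → Option (Fin m)) (l : List (Fin n))
    (s : MState n m) (h : ∀ a ∈ l, s.1 a = none → ch a = ch' a) :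
    l.foldl (agentStep ch) s = l.foldl (agentStep ch') s := by
  induction l generalizing s with
  | nil => rfl
  | cons a l ih =>
    have e : agentStep ch s a = agentStep ch' s a := by
      by_cases ha : s.1 a = none
      · simp [agentStep, h a (by simp) ha]
      · rw [agentStep_assigned ha, agentStep_assigned ha]
    rw [List.foldl_cons, List.foldl_cons, e]
    refine ih _ fun b hb hb' => h b (by simp [hb]) ?_
    by_contra h1
    exact (later_agentStep ch' s a).ne_none h1 hb'

/-- Moving the agents served during the first `k` rounds (those satisfying `P`) to the front of
the priority list, in unchanged relative order, does not alter the first `k` rounds. -/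
theorem iterate_reorder {n m : ℕ} (q : Fin m → ℕ) (t : Fin n → Pref m) (P : Fin n → Bool)
    (l rest : List (Fin n)) (hl : ∀ a, a ∈ l) (hrest : ∀ a ∈ rest, P a = false) (k : ℕ)
    (hP : ∀ a, ((abmStep t l)^[k] ((fun _ => none), q)).1 a ≠ none → P a = true) :
    (abmStep t (l.filter P ++ rest))^[k] ((fun _ => none), q) =
      (abmStep t l)^[k] ((fun _ => none), q) := by
  induction k with
  | zero => rfl
  | succ k ih =>
    rw [Function.iterate_succ_apply'] at hP
    rw [Function.iterate_succ_apply', Function.iterate_succ_apply',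
      ih fun a ha => hP a ((later_foldl _ l _).ne_none ha)]
    set s := (abmStep t l)^[k] ((fun _ => none), q)
    unfold abmStep at hP ⊢
    rw [List.foldl_append, foldl_filter _ P l s hP]
    refine foldl_eq_self _ _ _ fun a ha => agentStep_zero ?_
    have hna : (l.foldl (agentStep (fun a => favorite (t a) s.2)) s).1 a = none := by
      by_contra h
      simpa [hrest a ha] using hP a h
    exact exhausted_of_rejected (hl a) hna

/-! ### Favorites and priority lists -/

theorem favorite_some {m : ℕ} {ti : Pref m} {cap : Fin m → ℕ} {c : Fin m}
    (h : favorite ti cap = some c) :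
    0 < cap c ∧ ∀ b, 0 < cap b → ti.symm c ≤ ti.symm b := by
  unfold favorite at h
  rw [Option.map_eq_some_iff] at h
  obtain ⟨k, hk, rfl⟩ := h
  rw [List.find?_eq_some_iff_getElem] at hk
  obtain ⟨h1, p, hp, h2, h3⟩ := hk
  refine ⟨by simpa using h1, fun b hb => ?_⟩
  rw [Equiv.symm_apply_apply]
  by_contra! hlt
  have hp' : (k : ℕ) = p := by rw [← h2]; simp
  have := h3 (ti.symm b) (by rw [← hp']; exact hlt)
  simp at this
  omega

theorem favorite_none {m : ℕ} {ti : Pref m} {cap : Fin m → ℕ}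
    (h : favorite ti cap = none) (b : Fin m) : cap b = 0 := by
  unfold favorite at h
  rw [Option.map_eq_none_iff, List.find?_eq_none] at h
  have := h (ti.symm b) (List.mem_finRange _)
  simpa using this

theorem exists_favorite {m : ℕ} (ti : Pref m) {cap : Fin m → ℕ} {b : Fin m} (hb : 0 < cap b) :
    ∃ c, favorite ti cap = some c := by
  cases h : favorite ti cap with
  | none => have := favorite_none h b; omega
  | some c => exact ⟨c, rfl⟩

theorem priorityList_perm {n : ℕ} (π : Equiv.Perm (Fin n)) :
    (priorityList π).Perm (List.finRange n) := by
  unfold priorityList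
  rw [List.perm_ext_iff_of_nodup ((List.nodup_finRange n).map π.symm.injective)
    (List.nodup_finRange n)]
  intro a
  simp only [List.mem_map, List.mem_finRange, true_and, iff_true]
  exact ⟨π a, by simp⟩

theorem exists_priorityList {n : ℕ} {l : List (Fin n)} (h : l.Perm (List.finRange n)) :
    ∃ π : Equiv.Perm (Fin n), priorityList π = l := by
  have hlen : l.length = n := by simpa using h.length_eq
  have hnd : l.Nodup := h.nodup_iff.2 (List.nodup_finRange n)
  have hinj : Function.Injective (fun k : Fin n => l.get (k.cast hlen.symm)) := by
    intro x y hxy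
    have := hnd.injective_get hxy
    simpa using this
  let e : Equiv.Perm (Fin n) := Equiv.ofBijective _ (Finite.injective_iff_bijective.1 hinj)
  refine ⟨e.symm, ?_⟩
  apply List.ext_getElem
  · simp [priorityList, hlen]
  · intro k h1 h2
    simp [priorityList, e]

/-! ### The effect of a misreport -/

/-- If the misreport `t' i` yields `b` under `π` and truth-telling does not, then there is an
object `c` that `i` truly prefers to `b`, and an ordering under which truth-telling yields `c`
and the misreport does not.  Here `c` is the object that `i` truthfully applies to in the first
round in which the two reports lead to different applications. -/
theorem exists_better_order {n m : ℕ} (q : Fin m → ℕ) (t t' : Fin n → Pref m) (i : Fin n)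
    (ht : ∀ a, a ≠ i → t' a = t a) (π : Equiv.Perm (Fin n)) (b : Fin m)
    (hL : ABMassign q t' π i = some b) (hT : ABMassign q t π i ≠ some b) :
    ∃ (π' : Equiv.Perm (Fin n)) (c : Fin m), (t i).symm c < (t i).symm b ∧
      ABMassign q t π' i = some c ∧ ABMassign q t' π' i ≠ some c := by
  rw [ABMassign_eq] at hL hT
  have hperm := priorityList_perm π
  set l := priorityList π with hl
  have hmem : ∀ a, a ∈ l := fun a => hperm.mem_iff.2 (List.mem_finRange a)
  have hnd : l.Nodup := hperm.nodup_iff.2 (List.nodup_finRange n)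
  set s0 : MState n m := ((fun _ => none), q) with hs0
  -- `k + 1` is the first number of rounds after which the states differ.
  have hne : ∃ k, (abmStep t l)^[k] s0 ≠ (abmStep t' l)^[k] s0 :=
    ⟨n, fun h => hT (by rw [h]; exact hL)⟩
  classical
  obtain ⟨k, hkn, heq, hdiff⟩ : ∃ k, k + 1 ≤ n ∧
      (abmStep t l)^[k] s0 = (abmStep t' l)^[k] s0 ∧
      (abmStep t l)^[k + 1] s0 ≠ (abmStep t' l)^[k + 1] s0 := by
    have h1 := Nat.find_spec hne
    have h2 : Nat.find hne ≤ n := Nat.find_min' hne fun h => hT (by rw [h]; exact hL)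
    have h3 : Nat.find hne ≠ 0 := fun h => by rw [h] at h1; exact h1 rfl
    obtain ⟨k, hk⟩ := Nat.exists_eq_succ_of_ne_zero h3
    rw [hk] at h1 h2
    exact ⟨k, h2, not_not.1 (Nat.find_min hne (by omega)), h1⟩
  obtain ⟨d, hd⟩ := Nat.exists_eq_add_of_le' hkn
  set s := (abmStep t l)^[k] s0 with hs
  have hiter : ∀ (f : MState n m → MState n m) (x : MState n m),
      f^[n] x = f^[d] (f (f^[k] x)) := fun f x => by
    rw [← Function.iterate_succ_apply' f, ← Function.iterate_add_apply]
    exact congrArg (fun j => f^[j] x) hd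
  have splitT : (abmStep t l)^[n] s0 = (abmStep t l)^[d] (abmStep t l s) := by
    rw [hiter]
  have splitL : (abmStep t' l)^[n] s0 = (abmStep t' l)^[d] (abmStep t' l s) := by
    rw [hiter, heq]
  rw [Function.iterate_succ_apply', Function.iterate_succ_apply', ← heq, ← hs] at hdiff
  rw [splitT] at hT
  rw [splitL] at hL
  have hdiv : s.1 i = none ∧ favorite (t i) s.2 ≠ favorite (t' i) s.2 := by
    by_contra hcon
    refine hdiff (foldl_congr _ _ l s fun a _ ha => ?_)
    by_cases hai : a = i
    · subst hai
      by_contra h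
      exact hcon ⟨ha, h⟩
    · rw [ht a hai]
  obtain ⟨hi, hfav⟩ := hdiv
  have hbpos : 0 < s.2 b :=
    ((later_foldl _ l s).trans (later_iterate t' l d _)).2.2 i b hi hL
  obtain ⟨c, hc⟩ := exists_favorite (t i) hbpos
  obtain ⟨c', hc'⟩ := exists_favorite (t' i) hbpos
  have hcc' : c' ≠ c := by
    rintro rfl
    exact hfav (hc.trans hc'.symm)
  obtain ⟨hcpos, hcbest⟩ := favorite_some hc
  have hcpos' : 0 < s.2 c' := (favorite_some hc').left
  -- Were `b = c`, then `c` would still be available after round `k + 1` of the misreport, hence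
  -- also when `i` applies in that round, and truth-telling would yield `c` as well.
  have hbc : b ≠ c := by
    rintro rfl
    obtain ⟨l1, l2, hsplit⟩ := List.append_of_mem (hmem i)
    have hi1 : i ∉ l1 := by
      intro h
      rw [hsplit] at hnd
      exact (List.nodup_append.1 hnd).2.2 i h i (by simp) rfl
    set chT : Fin n → Option (Fin m) := fun a => favorite (t a) s.2 with hchT
    set chL : Fin n → Option (Fin m) := fun a => favorite (t' a) s.2 with hchL
    have hpre : l1.foldl (agentStep chT) s = l1.foldl (agentStep chL) s := by
      refine foldl_congr _ _ l1 s fun a ha _ => ?_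
      have : a ≠ i := fun h => hi1 (h ▸ ha)
      simp [hchT, hchL, ht a this]
    have eT : abmStep t l s =
        l2.foldl (agentStep chT) (agentStep chT (l1.foldl (agentStep chT) s) i) := by
      unfold abmStep
      rw [hsplit, List.foldl_append, List.foldl_cons]
    have eL : abmStep t' l s =
        l2.foldl (agentStep chL) (agentStep chL (l1.foldl (agentStep chT) s) i) := by
      unfold abmStep
      rw [hpre, hsplit, List.foldl_append, List.foldl_cons]
    rw [eT] at hT
    rw [eL] at hL
    have hpi : (l1.foldl (agentStep chT) s).1 i = none := by
      by_contra h
      have hL' := ((later_agentStep chL (l1.foldl (agentStep chT) s) i).trans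
        (later_foldl chL l2 _)).trans (later_iterate t' l d _)
      have hT' := ((later_agentStep chT (l1.foldl (agentStep chT) s) i).trans
        (later_foldl chT l2 _)).trans (later_iterate t l d _)
      obtain ⟨j, hj⟩ := Option.ne_none_iff_exists'.1 h
      have e1 := hL'.2.1 i j hj
      have e2 := hT'.2.1 i j hj
      rw [hL] at e1
      exact hT (e2.trans e1.symm)
    set p := l1.foldl (agentStep chT) s with hp
    have hLl := (later_foldl chL l2 (agentStep chL p i)).trans (later_iterate t' l d _)
    have hTl := (later_foldl chT l2 (agentStep chT p i)).trans (later_iterate t l d _)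
    have hnotc' : agentStep chL p i = p := by
      rcases agentStep_cases chL p i with h | ⟨j, -, hj, -, e⟩
      · exact h
      · exfalso
        have : (agentStep chL p i).1 i = some j := by rw [e]; simp
        have h2 := hLl.2.1 i j this
        rw [hL] at h2
        cases h2
        exact hcc' (Option.some.inj (hc'.symm.trans hj))
    rw [hnotc'] at hLl hL
    have hpb : 0 < p.2 b := hLl.2.2 i b hpi hL
    have hchTi : chT i = some b := hc
    apply hT
    apply hTl.2.1
    rw [agentStep_pos hpi hchTi hpb]
    simp
  -- Agents served in the first `k` rounds, then `i`, then all others.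
  let P : Fin n → Bool := fun a => (s.1 a).isSome
  let rest : List (Fin n) := i :: (l.filter (fun a => !P a)).erase i
  have hPi : P i = false := by simp [P, hi]
  have hnew : (l.filter P ++ rest).Perm (List.finRange n) := by
    have h1 : (l.filter (fun a => !P a)).Perm rest :=
      List.perm_cons_erase (List.mem_filter.2 ⟨hmem i, by simp [hPi]⟩)
    exact ((h1.symm.append_left _).trans (List.filter_append_perm P l)).trans hperm
  obtain ⟨π', hπ'⟩ := exists_priorityList hnew
  have hrest : ∀ a ∈ rest, P a = false := by
    intro a ha
    rcases List.mem_cons.1 ha with rfl | ha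
    · exact hPi
    · simpa using (List.mem_filter.1 (List.mem_of_mem_erase ha)).2
  -- Under this ordering, `i` receives the object that it applies to in round `k + 1`.
  have gets : ∀ (t₀ : Fin n → Pref m) (c₀ : Fin m), (abmStep t₀ l)^[k] s0 = s →
      favorite (t₀ i) s.2 = some c₀ → 0 < s.2 c₀ → ABMassign q t₀ π' i = some c₀ := by
    intro t₀ c₀ he hf hpos
    rw [ABMassign_eq, hπ', ← hs0, hiter, iterate_reorder q t₀ P l rest hmem hrest k
        (by
          intro a ha
          rw [he] at ha
          exact Option.isSome_iff_ne_none.2 ha), he]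
    apply (later_iterate t₀ _ d _).2.1
    unfold abmStep
    rw [List.foldl_append, foldl_eq_self _ (l.filter P) s fun a ha => agentStep_assigned
      (Option.isSome_iff_ne_none.1 (List.mem_filter.1 ha).2), List.foldl_cons]
    apply (later_foldl _ _ _).2.1
    rw [agentStep_pos hi hf hpos]
    simp
  refine ⟨π', c, ?_, gets t c rfl hc hcpos, ?_⟩
  · refine lt_of_le_of_ne (hcbest b hbpos) fun h => hbc ((t i).symm.injective h).symm
  · rw [gets t' c' heq.symm hc' hcpos']
    simpa using hcc'

/-! ### Every agent is served -/

/-- The number of unassigned agents. -/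
def unassigned {n m : ℕ} (s : MState n m) : ℕ := ∑ a, if s.1 a = none then 1 else 0

theorem sum_cap_agentStep {n m : ℕ} (ch : Fin n → Option (Fin m)) (s : MState n m)
    (a : Fin n) :
    (∑ j, (agentStep ch s a).2 j) + unassigned s =
      (∑ j, s.2 j) + unassigned (agentStep ch s a) := by
  rcases agentStep_cases ch s a with h | ⟨j, h, -, hp, e⟩
  · rw [h]
  · rw [e]
    unfold unassigned
    dsimp only
    rw [← Finset.add_sum_erase univ (fun x => if s.1 x = none then 1 else 0) (mem_univ a),
      ← Finset.add_sum_erase univ (fun x => if Function.update s.1 a (some j) x = none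
        then 1 else 0) (mem_univ a), ← Finset.add_sum_erase univ s.2 (mem_univ j),
      ← Finset.add_sum_erase univ (Function.update s.2 j (s.2 j - 1)) (mem_univ j)]
    have e1 : ∑ x ∈ univ.erase j, Function.update s.2 j (s.2 j - 1) x =
        ∑ x ∈ univ.erase j, s.2 x :=
      Finset.sum_congr rfl fun x hx => by simp [(Finset.mem_erase.1 hx).1]
    have e2 : ∑ x ∈ univ.erase a, (if Function.update s.1 a (some j) x = none then 1 else 0) =
        ∑ x ∈ univ.erase a, (if s.1 x = none then 1 else 0) :=
      Finset.sum_congr rfl fun x hx => by simp [(Finset.mem_erase.1 hx).1]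
    rw [e1, e2]
    simp [h]
    omega

theorem sum_cap_foldl {n m : ℕ} (ch : Fin n → Option (Fin m)) (l : List (Fin n))
    (s : MState n m) :
    (∑ j, (l.foldl (agentStep ch) s).2 j) + unassigned s =
      (∑ j, s.2 j) + unassigned (l.foldl (agentStep ch) s) := by
  induction l generalizing s with
  | nil => rfl
  | cons a l ih =>
    rw [List.foldl_cons]
    have h1 := ih (agentStep ch s a)
    have h2 := sum_cap_agentStep ch s a
    omega

theorem unassigned_le {n m : ℕ} {s s' : MState n m} (h : Later s s') :
    unassigned s' ≤ unassigned s := by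
  refine Finset.sum_le_sum fun a _ => ?_
  by_cases ha : s.1 a = none
  · simp only [ha, if_true]; split <;> simp
  · simp [h.ne_none ha]

/-- As long as there is enough capacity for the unassigned agents, every round serves at least
one of them. -/
theorem unassigned_abmStep {n m : ℕ} (t : Fin n → Pref m) (l : List (Fin n))
    (hl : ∀ a, a ∈ l) (s : MState n m) (hs : unassigned s ≤ ∑ j, s.2 j) :
    unassigned (abmStep t l s) = 0 ∨ unassigned (abmStep t l s) < unassigned s := by
  have L : Later s (abmStep t l s) := later_foldl _ l s
  have hsum : (∑ j, (abmStep t l s).2 j) + unassigned s =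
      (∑ j, s.2 j) + unassigned (abmStep t l s) := sum_cap_foldl _ l s
  by_contra! hcon
  obtain ⟨h0, hge⟩ := hcon
  have heq : unassigned (abmStep t l s) = unassigned s := le_antisymm (unassigned_le L) hge
  -- No capacity is used in the round, so an unassigned agent cannot have been rejected.
  have hcap : ∀ j ∈ univ, (abmStep t l s).2 j = s.2 j :=
    (Finset.sum_eq_sum_iff_of_le fun j _ => L.1 j).1 (by omega)
  obtain ⟨a, -, ha⟩ := Finset.exists_ne_zero_of_sum_ne_zero h0
  have ha' : (abmStep t l s).1 a = none := by
    by_contra h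
    simp [h] at ha
  have hpos : ∑ j, s.2 j ≠ 0 := by omega
  obtain ⟨j, -, hj⟩ := Finset.exists_ne_zero_of_sum_ne_zero hpos
  obtain ⟨c, hc⟩ := exists_favorite (t a) (Nat.pos_of_ne_zero hj)
  have h1 : (abmStep t l s).2 c = 0 := exhausted_of_rejected (hl a) ha' c hc
  rw [hcap c (mem_univ c)] at h1
  have := (favorite_some hc).1
  omega

theorem ABMassign_ne_none {n m : ℕ} (q : Fin m → ℕ) (hq : n ≤ ∑ j, q j)
    (t : Fin n → Pref m) (π : Equiv.Perm (Fin n)) (i : Fin n) :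
    ABMassign q t π i ≠ none := by
  rw [ABMassign_eq]
  have hmem : ∀ a, a ∈ priorityList π :=
    fun a => (priorityList_perm π).mem_iff.2 (List.mem_finRange a)
  generalize priorityList π = l at hmem ⊢
  have key : ∀ k, unassigned ((abmStep t l)^[k] ((fun _ => none), q)) ≤ n - k ∧
      unassigned ((abmStep t l)^[k] ((fun _ => none), q)) ≤
        ∑ j, ((abmStep t l)^[k] ((fun _ => none), q)).2 j := by
    intro k
    induction k with
    | zero => simpa [unassigned] using hq
    | succ k ih =>
      rw [Function.iterate_succ_apply']
      set s := (abmStep t l)^[k] ((fun _ => none), q)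
      have h1 := unassigned_abmStep t l hmem s ih.2
      have h2 : (∑ j, (abmStep t l s).2 j) + unassigned s =
        (∑ j, s.2 j) + unassigned (abmStep t l s) := sum_cap_foldl _ l s
      omega
  intro h
  have h0 := (key n).1
  rw [Nat.sub_self, Nat.le_zero, unassigned, Finset.sum_eq_zero_iff] at h0
  have := h0 i (mem_univ i)
  simp [h] at this

/-! ### From orderings to expected utilities -/

/-- The number of priority orderings under which agent `i` receives object `j`. -/
noncomputable def winCount {n m : ℕ} (q : Fin m → ℕ) (t : Fin n → Pref m) (i : Fin n)
    (j : Fin m) : ℝ :=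
  ∑ π : Equiv.Perm (Fin n), detAlloc (ABMassign q t π) i j

theorem winCount_nonneg {n m : ℕ} (q : Fin m → ℕ) (t : Fin n → Pref m) (i : Fin n)
    (j : Fin m) : 0 ≤ winCount q t i j :=
  Finset.sum_nonneg fun π _ => by unfold detAlloc; split <;> norm_num

theorem sum_winCount {n m : ℕ} (q : Fin m → ℕ) (hq : n ≤ ∑ j, q j) (t : Fin n → Pref m)
    (i : Fin n) : ∑ j, winCount q t i j = Nat.factorial n := by
  unfold winCount
  rw [Finset.sum_comm]
  have : ∀ π : Equiv.Perm (Fin n), ∑ j, detAlloc (ABMassign q t π) i j = 1 := by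
    intro π
    obtain ⟨c, hc⟩ := Option.ne_none_iff_exists'.1 (ABMassign_ne_none q hq t π i)
    simp [detAlloc, hc]
  simp [this, Fintype.card_perm]

/-- Truth-telling lexicographically dominates a misreport: either both give the same
distribution, or at the best object (in the true ranking) with different counts truth-telling
wins for at least one more ordering. -/
theorem winCount_lex {n m : ℕ} (q : Fin m → ℕ) (t t' : Fin n → Pref m) (i : Fin n)
    (ht : ∀ a, a ≠ i → t' a = t a) :
    (∀ j, winCount q t' i j = winCount q t i j) ∨
      ∃ b, winCount q t' i b + 1 ≤ winCount q t i b ∧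
        ∀ j, (t i).symm j < (t i).symm b → winCount q t' i j = winCount q t i j := by
  classical
  let D : Finset (Fin m) := univ.filter fun j =>
    ∃ π, ¬ (ABMassign q t π i = some j ↔ ABMassign q t' π i = some j)
  have hD : ∀ j, j ∉ D → winCount q t' i j = winCount q t i j := by
    intro j hj
    refine Finset.sum_congr rfl fun π _ => ?_
    have : ABMassign q t π i = some j ↔ ABMassign q t' π i = some j := by
      by_contra h
      exact hj (Finset.mem_filter.2 ⟨mem_univ j, π, h⟩)
    simp [detAlloc, this]
  rcases D.eq_empty_or_nonempty with hE | hE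
  · exact Or.inl fun j => hD j (by simp [hE])
  · obtain ⟨b, hb, hmin⟩ := D.exists_min_image (fun j => (t i).symm j) hE
    refine Or.inr ⟨b, ?_, fun j hj => hD j fun h => absurd (hmin j h) (not_le.2 hj)⟩
    have himp : ∀ π, ABMassign q t' π i = some b → ABMassign q t π i = some b := by
      intro π hL
      by_contra hT
      obtain ⟨π', c, hlt, h1, h2⟩ := exists_better_order q t t' i ht π b hL hT
      refine absurd (hmin c (Finset.mem_filter.2 ⟨mem_univ c, π', ?_⟩)) (not_le.2 hlt)
      tauto
    obtain ⟨π₀, hπ₀⟩ := (Finset.mem_filter.1 hb).2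
    have hT₀ : ABMassign q t π₀ i = some b := by
      by_contra h
      exact hπ₀ ⟨fun h' => absurd h' h, himp π₀⟩
    have hL₀ : ABMassign q t' π₀ i ≠ some b := fun h => hπ₀ ⟨fun _ => h, himp π₀⟩
    unfold winCount
    rw [← Finset.add_sum_erase univ _ (mem_univ π₀),
      ← Finset.add_sum_erase univ (fun π => detAlloc (ABMassign q t π) i b) (mem_univ π₀)]
    have hle : ∑ π ∈ univ.erase π₀, detAlloc (ABMassign q t' π) i b ≤
        ∑ π ∈ univ.erase π₀, detAlloc (ABMassign q t π) i b := by
      refine Finset.sum_le_sum fun π _ => ?_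
      unfold detAlloc
      by_cases h : ABMassign q t' π i = some b
      · simp [h, himp π h]
      · rw [if_neg h]
        split <;> norm_num
    have e1 : detAlloc (ABMassign q t' π₀) i b = 0 := by simp [detAlloc, hL₀]
    have e2 : detAlloc (ABMassign q t π₀) i b = 1 := by simp [detAlloc, hT₀]
    rw [e1, e2]
    linarith

/-- ABM is partially strategyproof: for every setting there is some
`r ∈ (0,1]` such that ABM is `r`-partially strategyproof in that setting. -/
theorem abm_partially_strategyproof (n m : ℕ) (q : Fin m → ℕ) (hq : n ≤ ∑ j, q j) :
    ∃ r : ℝ, 0 < r ∧ r ≤ 1 ∧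
      ∀ (t : Fin n → Pref m) (i : Fin n) (ti' : Pref m) (u : Fin m → ℝ),
        Consistent (t i) u → URBI r u →
        ∑ j, u j * ABM q (Function.update t i ti') i j ≤ ∑ j, u j * ABM q t i j := by
  have hfac : (1 : ℝ) ≤ (Nat.factorial n : ℝ) := by
    exact_mod_cast Nat.succ_le_of_lt (Nat.factorial_pos n)
  have hfac0 : (0 : ℝ) < (Nat.factorial n : ℝ) := by linarith
  -- Winning counts are integers with total `n!`, so `r = 1 / n!` lets a gain of one ordering at
  -- an object outweigh any loss at worse objects.
  refine ⟨1 / Nat.factorial n, by positivity, (div_le_one hfac0).2 hfac, ?_⟩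
  intro t i ti' u hcons hurbi
  set t' := Function.update t i ti' with ht'
  have ht : ∀ a, a ≠ i → t' a = t a := fun a ha => by simp [ht', ha]
  have conv : ∀ s : Fin n → Pref m,
      ∑ j, u j * ABM q s i j = (∑ j, u j * winCount q s i j) / Nat.factorial n := by
    intro s
    rw [Finset.sum_div]
    exact Finset.sum_congr rfl fun j _ => by unfold ABM winCount; ring
  rw [conv, conv]
  refine div_le_div_of_nonneg_right ?_ hfac0.le
  rcases winCount_lex q t t' i ht with h | ⟨b, hb, habove⟩
  · simp [h]
  set μ := ⨅ j, u j with hμ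
  have hv : ∀ j, 0 ≤ u j - μ := fun j =>
    sub_nonneg.2 (ciInf_le (Set.finite_range u).bddBelow j)
  have hterm : ∀ j, (if j = b then u b - μ else 0)
      - 1 / (Nat.factorial n : ℝ) * (u b - μ) * winCount q t' i j ≤
      (u j - μ) * (winCount q t i j - winCount q t' i j) := by
    intro j
    have hw := winCount_nonneg q t i j
    have hw' := winCount_nonneg q t' i j
    have hr : 0 ≤ 1 / (Nat.factorial n : ℝ) * (u b - μ) * winCount q t' i j :=
      mul_nonneg (mul_nonneg (by positivity) (hv b)) hw'
    by_cases hjb : j = b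
    · subst hjb
      rw [if_pos rfl]
      nlinarith [hv j]
    · rw [if_neg hjb]
      rcases lt_or_ge ((t i).symm j) ((t i).symm b) with hlt | hge
      · rw [habove j hlt, sub_self, mul_zero, ← habove j hlt]
        linarith
      · have hlt : (t i).symm b < (t i).symm j :=
          lt_of_le_of_ne hge fun h => hjb ((t i).symm.injective h).symm
        have h1 := hurbi b j (hcons b j hlt)
        rw [← hμ] at h1
        have h2 := mul_le_mul_of_nonneg_right h1 hw'
        have h3 := mul_nonneg (hv j) hw
        nlinarith
  have hsum := Finset.sum_le_sum fun j (_ : j ∈ univ) => hterm j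
  rw [Finset.sum_sub_distrib, ← Finset.mul_sum, sum_winCount q hq] at hsum
  simp only [Finset.sum_ite_eq', mem_univ, if_true] at hsum
  have hz : 1 / (Nat.factorial n : ℝ) * (u b - μ) * (Nat.factorial n : ℝ) = u b - μ := by
    field_simp
  rw [hz, sub_self] at hsum
  have hexp : ∑ j, (u j - μ) * (winCount q t i j - winCount q t' i j) =
      (∑ j, u j * winCount q t i j) - (∑ j, u j * winCount q t' i j)
        - μ * ((∑ j, winCount q t i j) - ∑ j, winCount q t' i j) := by
    rw [← Finset.sum_sub_distrib, ← Finset.sum_sub_distrib, Finset.mul_sum,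
      ← Finset.sum_sub_distrib]
    exact Finset.sum_congr rfl fun j _ => by ring
  rw [hexp, sum_winCount q hq, sum_winCount q hq, sub_self, mul_zero, sub_zero] at hsum
  linarith
end

section
/- The degree of strategyproofness of ABM vanishes in large unit-capacity markets: for every r ∈ (0,1], there exists N_0 ∈ ℕ such that for every n ≥ N_0, in the setting with n agents and n objects each of capacity 1, ABM is not r-partially strategyproof; i.e., there exist an agent i, a type profile (t_i, t_{-i}), a misreport t_i', and a utility u_i consistent with t_i satisfying URBI(r) such that Σ_j u_i(j)·ABM_i(t_i', t_{-i})_j > Σ_j u_i(j)·ABM_i(t_i, t_{-i})_j. -/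
/-!
Let all `n` agents share the same ranking `0 ≻ 1 ≻ 2 ≻ ⋯`, and take the geometric utility
`u j = s ^ j` with `s = min r (1/2)`, which is consistent and satisfies URBI(`r`).

* Under truthful reporting each object is handed out at most once (`sum_ABM_le_one`), so the
  utilities of all agents add up to at most `∑ s ^ j ≤ 2`. Hence, as soon as `2 < n * s`, some
  agent `i` has expected utility below `s`.
* If that agent exchanges the objects `0` and `1` in its report, it is the only applicant for
  object `1` in the first round, so it gets object `1`, of utility `s`, for every priority ordering
  (`ABMassign_of_sole_applicant`).

Choosing `i` by averaging avoids a symmetry argument for the truthful allocation.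
-/

open Finset

/-- An agent keeps its object in later rounds. -/
lemma applyRound_keeps {n m : ℕ} (choice : Fin n → Option (Fin m)) (order : List (Fin n))
    (st : (Fin n → Option (Fin m)) × (Fin m → ℕ)) (i : Fin n) (o : Fin m)
    (h : st.1 i = some o) : (applyRound choice order st).1 i = some o := by
  unfold applyRound
  induction order generalizing st with
  | nil => simpa using h
  | cons k l ih =>
    rw [List.foldl_cons]
    apply ih
    split
    · exact h
    · rename_i hk
      have hik : i ≠ k := by rintro rfl; simp [h] at hk
      split
      · exact h
      · split
        · simpa [Function.update_of_ne hik] using h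
        · exact h

/-- An agent that is the only one to apply for an available object receives it. -/
lemma applyRound_of_sole_applicant {n m : ℕ} (choice : Fin n → Option (Fin m))
    (order : List (Fin n)) (st : (Fin n → Option (Fin m)) × (Fin m → ℕ)) (i : Fin n) (o : Fin m)
    (hi : choice i = some o) (hne : ∀ k, k ≠ i → choice k ≠ some o)
    (hmem : i ∈ order) (hfree : st.1 i = none) (hcap : 0 < st.2 o) :
    (applyRound choice order st).1 i = some o := by
  induction order generalizing st with
  | nil => simp at hmem
  | cons k l ih =>
    by_cases hk : k = i
    · subst hk
      have h1 : applyRound choice (k :: l) st = applyRound choice l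
          (Function.update st.1 k (some o), Function.update st.2 o (st.2 o - 1)) := by
        simp [applyRound, hfree, hi, hcap]
      rw [h1]
      apply applyRound_keeps
      simp
    · have hl : i ∈ l := by
        rcases List.mem_cons.1 hmem with h | h
        · exact absurd h.symm hk
        · exact h
      unfold applyRound
      rw [List.foldl_cons]
      change (applyRound choice l _).1 i = some o
      apply ih _ hl
      · split
        · exact hfree
        · split
          · exact hfree
          · split
            · simpa [Function.update_of_ne (Ne.symm hk)] using hfree
            · exact hfree
      · split
        · exact hcap
        · split
          · exact hcap
          · rename_i j hj
            have hjo : o ≠ j := by rintro rfl; exact hne k hk hj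
            split
            · simpa [Function.update_of_ne hjo] using hcap
            · exact hcap

/-- No object has been given to two agents, and an object that has been given away is exhausted. -/
def NoDup {n m : ℕ} (st : (Fin n → Option (Fin m)) × (Fin m → ℕ)) : Prop :=
  (∀ j, st.2 j ≤ 1) ∧ (∀ i j, st.1 i = some j → st.2 j = 0) ∧
    ∀ i i' j, st.1 i = some j → st.1 i' = some j → i = i'

lemma applyRound_noDup {n m : ℕ} (choice : Fin n → Option (Fin m)) (order : List (Fin n))
    (st : (Fin n → Option (Fin m)) × (Fin m → ℕ)) (h : NoDup st) :
    NoDup (applyRound choice order st) := by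
  unfold applyRound
  induction order generalizing st with
  | nil => simpa using h
  | cons k l ih =>
    rw [List.foldl_cons]
    apply ih
    split
    · exact h
    · split
      · exact h
      · rename_i o _
        split
        · rename_i hpos
          obtain ⟨h1, h2, h3⟩ := h
          -- `o` still has capacity, so by the invariant nobody holds it yet.
          have hno : ∀ i, st.1 i ≠ some o := fun i hi => by
            have := h2 i o hi
            omega
          refine ⟨fun j => ?_, fun i j hij => ?_, fun i i' j hij hij' => ?_⟩
          · have := h1 j
            have := h1 o
            simp only [Function.update_apply]
            split <;> omega
          · have := h1 o
            have := h2 i j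
            simp only [Function.update_apply] at hij ⊢
            grind
          · have := h3 i i' j
            have := hno i
            have := hno i'
            simp only [Function.update_apply] at hij hij'
            grind
        · exact h

lemma ABMassign_injective {n m : ℕ} (t : Fin n → Pref m) (π : Equiv.Perm (Fin n))
    (i i' : Fin n) (j : Fin m) (h : ABMassign (fun _ => 1) t π i = some j)
    (h' : ABMassign (fun _ => 1) t π i' = some j) : i = i' := by
  have key : ∀ k : ℕ, NoDup ((fun st : (Fin n → Option (Fin m)) × (Fin m → ℕ) =>
      applyRound (fun i => favorite (t i) st.2) (priorityList π) st)^[k]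
      ((fun _ => none), fun _ => 1)) := by
    intro k
    induction k with
    | zero => simp [NoDup]
    | succ k ih =>
      rw [Function.iterate_succ_apply']
      exact applyRound_noDup _ _ _ ih
  exact (key n).2.2 i i' j h h'

lemma ABM_nonneg {n m : ℕ} (q : Fin m → ℕ) (t : Fin n → Pref m) (i : Fin n) (j : Fin m) :
    0 ≤ ABM q t i j := by
  unfold ABM detAlloc
  refine div_nonneg (Finset.sum_nonneg fun π _ => ?_) (by positivity)
  split <;> norm_num

lemma sum_ABM_le_one {n m : ℕ} (t : Fin n → Pref m) (j : Fin m) :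
    ∑ i, ABM (fun _ => 1) t i j ≤ 1 := by
  unfold ABM
  rw [← Finset.sum_div, Finset.sum_comm, div_le_one (by positivity)]
  have h : ∀ π : Equiv.Perm (Fin n),
      ∑ i, detAlloc (ABMassign (fun _ => 1) t π) i j ≤ 1 := by
    intro π
    simp only [detAlloc, Finset.sum_boole]
    exact_mod_cast Finset.card_le_one.2 fun a ha b hb => by
      simp only [Finset.mem_filter, Finset.mem_univ, true_and] at ha hb
      exact ABMassign_injective t π a b j ha hb
  calc _ ≤ ∑ _π : Equiv.Perm (Fin n), (1 : ℝ) := Finset.sum_le_sum fun π _ => h π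
    _ = _ := by simp [Fintype.card_perm]

/-- With no object exhausted, the favorite is the top-ranked object. -/
lemma favorite_one {k : ℕ} (ti : Pref (k + 2)) : favorite ti (fun _ => 1) = some (ti 0) := by
  simp [favorite, List.finRange_succ]

lemma ABMassign_of_sole_applicant {k : ℕ} (t : Fin (k + 2) → Pref (k + 2))
    (π : Equiv.Perm (Fin (k + 2))) (i : Fin (k + 2)) (hne : ∀ l, l ≠ i → t l 0 ≠ t i 0) :
    ABMassign (fun _ => 1) t π i = some (t i 0) := by
  unfold ABMassign
  have key : ∀ p : ℕ, ((fun st : (Fin (k + 2) → Option (Fin (k + 2))) × (Fin (k + 2) → ℕ) =>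
      applyRound (fun i => favorite (t i) st.2) (priorityList π) st)^[p + 1]
      ((fun _ => none), fun _ => 1)).1 i = some (t i 0) := by
    intro p
    induction p with
    | zero =>
      rw [zero_add, Function.iterate_one]
      apply applyRound_of_sole_applicant
      · exact favorite_one _
      · intro l hl
        simpa [favorite_one] using hne l hl
      · simp only [priorityList, List.mem_map]
        exact ⟨π i, List.mem_finRange _, by simp⟩
      · rfl
      · exact Nat.one_pos
    | succ p ih =>
      rw [Function.iterate_succ_apply']
      exact applyRound_keeps _ _ _ _ _ ih
  exact key (k + 1)

/-- the degree of strategyproofness of ABM vanishes in large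
unit-capacity markets: for every `r ∈ (0,1]` there is `N0` such that for every
`n ≥ N0` (with `n` agents, `n` objects of capacity 1) ABM is not `r`-partially
strategyproof: some agent with a utility consistent with its type and satisfying
URBI(r) strictly gains from a misreport. -/
theorem abm_dosp_vanishes (r : ℝ) (hr0 : 0 < r) (hr1 : r ≤ 1) :
    ∃ N0 : ℕ, ∀ n : ℕ, N0 ≤ n →
      ∃ (t : Fin n → Pref n) (i : Fin n) (ti' : Pref n) (u : Fin n → ℝ),
        Consistent (t i) u ∧ URBI r u ∧
        ∑ j, u j * ABM (fun _ => 1) t i j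
          < ∑ j, u j * ABM (fun _ => 1) (Function.update t i ti') i j := by
  obtain ⟨s, hs0, hsr, hs2⟩ : ∃ s : ℝ, 0 < s ∧ s ≤ r ∧ s ≤ 1 / 2 :=
    ⟨min r (1 / 2), by positivity, min_le_left _ _, min_le_right _ _⟩
  obtain ⟨N, hN⟩ := exists_nat_gt (2 / s)
  refine ⟨N + 2, fun n hn => ?_⟩
  obtain ⟨k, rfl⟩ : ∃ k, n = k + 2 := ⟨n - 2, by omega⟩
  have hbig : 2 < ((k + 2 : ℕ) : ℝ) * s := by
    rw [div_lt_iff₀ hs0] at hN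
    have : (N : ℝ) ≤ ((k + 2 : ℕ) : ℝ) := by exact_mod_cast (by omega : N ≤ k + 2)
    nlinarith
  set t : Fin (k + 2) → Pref (k + 2) := fun _ => Equiv.refl _ with ht
  have hgeom : ∑ j : Fin (k + 2), s ^ (j : ℕ) ≤ 2 := by
    rw [Fin.sum_univ_eq_sum_range (fun j => s ^ j)]
    have h1 := mul_neg_geom_sum s (k + 2)
    have h2 : 0 < s ^ (k + 2) := by positivity
    have h3 : 0 ≤ ∑ j ∈ Finset.range (k + 2), s ^ j := Finset.sum_nonneg fun j _ => by positivity
    nlinarith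
  -- Averaging over the agents: the total utility is at most `2 < n * s`.
  obtain ⟨i, -, hi⟩ : ∃ i ∈ (Finset.univ : Finset (Fin (k + 2))),
      ∑ j : Fin (k + 2), s ^ (j : ℕ) * ABM (fun _ => 1) t i j < s := by
    apply Finset.exists_lt_of_sum_lt
    calc ∑ i, ∑ j : Fin (k + 2), s ^ (j : ℕ) * ABM (fun _ => 1) t i j
        = ∑ j : Fin (k + 2), s ^ (j : ℕ) * ∑ i, ABM (fun _ => 1) t i j := by
          rw [Finset.sum_comm]
          simp only [Finset.mul_sum]
      _ ≤ ∑ j : Fin (k + 2), s ^ (j : ℕ) := Finset.sum_le_sum fun j _ =>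
          mul_le_of_le_one_right (by positivity) (sum_ABM_le_one t j)
      _ < ∑ _i : Fin (k + 2), s := by
          rw [Finset.sum_const, Finset.card_univ, Fintype.card_fin, nsmul_eq_mul]
          linarith
  refine ⟨t, i, Equiv.swap 0 1, fun j => s ^ (j : ℕ), ?_, ?_, lt_of_lt_of_le hi ?_⟩
  · intro a b hab
    exact pow_lt_pow_right_of_lt_one₀ hs0 (by linarith) hab
  · intro a b hab
    -- Since `0 ≤ m` and `r ≤ 1`, subtracting the minimum `m` only weakens the ratio bound.
    have hlt : (a : ℕ) < b := (pow_lt_pow_iff_right_of_lt_one₀ hs0 (by linarith)).1 hab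
    have hm : 0 ≤ ⨅ j : Fin (k + 2), s ^ (j : ℕ) := Real.iInf_nonneg fun j => by positivity
    have h1 : s ^ (b : ℕ) ≤ s ^ ((a : ℕ) + 1) :=
      pow_le_pow_of_le_one hs0.le (by linarith) hlt
    have h2 : s ^ ((a : ℕ) + 1) ≤ r * s ^ (a : ℕ) := by
      rw [pow_succ']
      gcongr
    nlinarith
  -- After the swap, agent `i` alone top-ranks object `1`.
  · have hone : ABM (fun _ => 1) (Function.update t i (Equiv.swap 0 1)) i 1 = 1 := by
      have h : ∀ π, ABMassign (fun _ => 1) (Function.update t i (Equiv.swap 0 1)) π i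
          = some 1 := by
        intro π
        rw [ABMassign_of_sole_applicant]
        · simp
        · intro l hl
          simp [Function.update_of_ne hl, ht]
      have hf : ((Nat.factorial (k + 2) : ℕ) : ℝ) ≠ 0 := by positivity
      simp [ABM, detAlloc, h, Fintype.card_perm, div_self hf]
    calc s = s ^ ((1 : Fin (k + 2)) : ℕ) *
          ABM (fun _ => 1) (Function.update t i (Equiv.swap 0 1)) i 1 := by simp [hone]
      _ ≤ _ := Finset.single_le_sum
          (f := fun j : Fin (k + 2) => s ^ (j : ℕ) *
            ABM (fun _ => 1) (Function.update t i (Equiv.swap 0 1)) i j)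
          (fun j _ => mul_nonneg (by positivity) (ABM_nonneg _ _ _ _)) (Finset.mem_univ 1)
end

section
/- ABM does not imperfectly rank dominate RSD: there exist a setting (namely 6 agents and 6 objects, each object of capacity 1) and a type profile t at which RSD(t) strictly rank dominates ABM(t). -/
/-!
The witness has four majority agents ranking `0 > 1 > 2 > 3 > 4 > 5` and two minority agents ranking
`4 > 1 > 0 > 3 > 5 > 2`. At this profile the comparison holds for every priority ordering
separately (`numTop_ABMassign_le`), so it survives averaging.

Indeed, under both mechanisms the first majority agent gets object `0`, the first minority agent
gets object `4`, and the first of the remaining agents (three majority, one minority) gets object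
`1`. If that is the minority agent, the other three get their choices of rank 3, 4, 6 under both
mechanisms. Otherwise two majority agents and one minority agent compete for `2`, `3`, `5`. Under
ABM they apply to `2`, `2`, `3` at once, and end up with ranks 3, 6 (majority) and 4 (minority).
Under serial dictatorship the outcome is the same unless the minority agent comes last; then the
majority agents take ranks 3 and 4, and the minority agent gets `5`, which is its fifth choice:
a sixth choice is replaced by a fifth choice.

Formally, both mechanisms are equivariant under relabelling agents with equal preferences
(`ABMassign_mul`, `SDassign_mul`), so the comparison need only be made for the 15 priority
orderings that are increasing within each of the two groups. A lexicographic descent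
(`Pi.lex_desc`) reduces to these, and they are checked by evaluation.
-/

open Finset

/-! ### The profile and cumulative rank counts -/

/-- The ranking `4 > 1 > 0 > 3 > 5 > 2` of the two minority agents. -/
def minorityPref : Pref 6 where
  toFun := ![4, 1, 0, 3, 5, 2]
  invFun := ![2, 1, 5, 3, 0, 4]
  left_inv := by decide
  right_inv := by decide

/-- The witnessing profile: agents `0`, …, `3` rank the objects in their natural order, agents
`4` and `5` have `minorityPref`. -/
def profile : Fin 6 → Pref 6 :=
  ![Equiv.refl _, Equiv.refl _, Equiv.refl _, Equiv.refl _, minorityPref, minorityPref]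

/-- The cumulative rank count of a deterministic assignment: the number of agents who receive an
object among their choices `0`, …, `K` (0-indexed). -/
def numTop {n m : ℕ} (t : Fin n → Pref m) (a : Fin n → Option (Fin m)) (K : Fin m) : ℕ :=
  ∑ k ∈ Finset.Iic K, ∑ i, if a i = some (t i k) then 1 else 0

/-! ### Relabelling agents with equal preferences -/

section Equivariance

variable {n m : ℕ}

theorem priorityList_mul (π σ : Equiv.Perm (Fin n)) :
    priorityList (π * σ) = (priorityList π).map σ.symm := by
  simp [priorityList, Function.comp_def, Equiv.Perm.mul_def]

/-- Relabelling agents by `σ` commutes with a round. -/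
theorem applyRound_relabel (σ : Equiv.Perm (Fin n)) (choice : Fin n → Option (Fin m))
    (order : List (Fin n)) (a : Fin n → Option (Fin m)) (c : Fin m → ℕ) :
    applyRound (choice ∘ σ) (order.map σ.symm) (a ∘ σ, c) =
      ((applyRound choice order (a, c)).1 ∘ σ, (applyRound choice order (a, c)).2) := by
  induction order generalizing a c with
  | nil => rfl
  | cons i l ih =>
    simp only [applyRound, List.map_cons, List.foldl_cons, Function.comp_apply,
      Equiv.apply_symm_apply] at ih ⊢
    cases ha : a i with
    | some _ => exact ih a c
    | none =>
      cases hc : choice i with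
      | none => exact ih a c
      | some j =>
        by_cases hj : 0 < c j
        · have := ih (Function.update a i (some j)) (Function.update c j (c j - 1))
          simpa only [hj, if_true, Function.update_comp_equiv] using this
        · simpa only [hj, if_false] using ih a c

theorem ABMassign_mul (q : Fin m → ℕ) (t : Fin n → Pref m) (π σ : Equiv.Perm (Fin n))
    (hσ : ∀ i, t (σ i) = t i) :
    ABMassign q t (π * σ) = ABMassign q t π ∘ σ := by
  have key : ∀ r : ℕ, ∀ st : (Fin n → Option (Fin m)) × (Fin m → ℕ),
      (fun st => applyRound (fun i => favorite (t i) st.2) (priorityList (π * σ)) st)^[r]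
        (st.1 ∘ σ, st.2) =
      (((fun st => applyRound (fun i => favorite (t i) st.2) (priorityList π) st)^[r] st).1 ∘ σ,
        ((fun st => applyRound (fun i => favorite (t i) st.2) (priorityList π) st)^[r] st).2) := by
    intro r
    induction r with
    | zero => intro st; rfl
    | succ r ih =>
      intro st
      have h := applyRound_relabel σ (fun i => favorite (t i) st.2) (priorityList π) st.1 st.2
      have hch : (fun i => favorite (t i) st.2) ∘ σ = fun i => favorite (t i) st.2 := by
        funext i
        simp [hσ]
      rw [hch, ← priorityList_mul] at h
      simp only [Function.iterate_succ_apply]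
      rw [h]
      exact ih _
  exact congrArg Prod.fst (key n ((fun _ => none), q))

theorem SDassign_mul (q : Fin m → ℕ) (t : Fin n → Pref m) (π σ : Equiv.Perm (Fin n))
    (hσ : ∀ i, t (σ i) = t i) :
    SDassign q t (π * σ) = SDassign q t π ∘ σ := by
  have hσ' : ∀ i, t (σ.symm i) = t i := fun i => by
    rw [← hσ (σ.symm i), Equiv.apply_symm_apply]
  let f := fun (s : (Fin n → Option (Fin m)) × (Fin m → ℕ)) (i : Fin n) =>
      match favorite (t i) s.2 with
      | none => s
      | some j => (Function.update s.1 i (some j), Function.update s.2 j (s.2 j - 1))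
  have key : ∀ (l : List (Fin n)) (a : Fin n → Option (Fin m)) (c : Fin m → ℕ),
      (l.map σ.symm).foldl f (a ∘ σ, c) = ((l.foldl f (a, c)).1 ∘ σ, (l.foldl f (a, c)).2) := by
    intro l
    induction l with
    | nil => intro a c; rfl
    | cons i l ih =>
      intro a c
      rw [List.map_cons, List.foldl_cons, List.foldl_cons]
      cases h : favorite (t i) c with
      | none => simpa only [f, hσ', h] using ih a c
      | some j =>
        have := ih (Function.update a i (some j)) (Function.update c j (c j - 1))
        simpa only [f, hσ', h, Function.update_comp_equiv] using this
  have := congrArg Prod.fst (key (priorityList π) (fun _ => none) q)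
  rw [← priorityList_mul] at this
  exact this

theorem numTop_comp (t : Fin n → Pref m) (a : Fin n → Option (Fin m)) (σ : Equiv.Perm (Fin n))
    (hσ : ∀ i, t (σ i) = t i) (K : Fin m) : numTop t (a ∘ σ) K = numTop t a K := by
  refine Finset.sum_congr rfl fun k _ => ?_
  rw [← Equiv.sum_comp σ (fun i => if a i = some (t i k) then 1 else 0)]
  simp [hσ]

end Equivariance

/-! ### Comparison for each priority ordering -/

/-- The comparison for the 15 orderings that are increasing within each of the two groups, by
evaluation; the hypotheses are tested first, so the mechanisms are run for those orderings only. -/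
theorem numTop_ABMassign_le_of_sorted : ∀ π : Equiv.Perm (Fin 6),
    π 0 < π 1 → π 1 < π 2 → π 2 < π 3 → π 4 < π 5 →
    ∀ K, numTop profile (ABMassign (fun _ => 1) profile π) K ≤
      numTop profile (SDassign (fun _ => 1) profile π) K := by
  decide +kernel

/-- Ordering by ordering, serial dictatorship does at least as well as ABM at `profile`. -/
theorem numTop_ABMassign_le (π : Equiv.Perm (Fin 6)) (K : Fin 6) :
    numTop profile (ABMassign (fun _ => 1) profile π) K ≤
      numTop profile (SDassign (fun _ => 1) profile π) K := by
  -- Transposing an inverted pair of agents with equal preferences makes `π` lexicographically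
  -- smaller and changes neither side.
  induction h : toLex (π : Fin 6 → Fin 6) using WellFoundedLT.induction generalizing π with
  | ind x ih =>
    subst h
    have step : ∀ i j : Fin 6, i ≤ j → profile i = profile j → π j < π i →
        numTop profile (ABMassign (fun _ => 1) profile π) K ≤
          numTop profile (SDassign (fun _ => 1) profile π) K := by
      intro i j hij ht hπ
      have hσ : ∀ l, profile (Equiv.swap i j l) = profile l := by
        intro l
        rw [Equiv.swap_apply_def]
        split_ifs with h1 h2
        · rw [h1, ht]
        · rw [h2, ht]
        · rfl
      have := ih _ (Pi.lex_desc hij hπ) (π * Equiv.swap i j) rfl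
      rwa [ABMassign_mul _ _ _ _ hσ, SDassign_mul _ _ _ _ hσ, numTop_comp _ _ _ hσ,
        numTop_comp _ _ _ hσ] at this
    by_cases h01 : π 1 < π 0
    · exact step 0 1 (by decide) rfl h01
    by_cases h12 : π 2 < π 1
    · exact step 1 2 (by decide) rfl h12
    by_cases h23 : π 3 < π 2
    · exact step 2 3 (by decide) rfl h23
    by_cases h45 : π 5 < π 4
    · exact step 4 5 (by decide) rfl h45
    have lt_of : ∀ i j : Fin 6, i ≠ j → ¬ π j < π i → π i < π j := fun i j hne h =>
      lt_of_le_of_ne (not_lt.mp h) (π.injective.ne hne)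
    exact numTop_ABMassign_le_of_sorted π (lt_of 0 1 (by decide) h01) (lt_of 1 2 (by decide) h12)
      (lt_of 2 3 (by decide) h23) (lt_of 4 5 (by decide) h45) K

/-- In the ordering `0, 1, …, 5` agent `3` gets its sixth choice under ABM, whereas under serial
dictatorship no agent gets less than its fifth choice. -/
theorem numTop_ABMassign_lt_one : numTop profile (ABMassign (fun _ => 1) profile 1) 4 <
    numTop profile (SDassign (fun _ => 1) profile 1) 4 := by
  decide +kernel

/-! ### Averaging -/

/-- The cumulative rank distribution of an averaged mechanism is the average of the cumulative rank
counts; `A π` stands for either mechanism. -/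
theorem sum_rankDist_average {n m : ℕ} (t : Fin n → Pref m)
    (A : Equiv.Perm (Fin n) → Fin n → Option (Fin m)) (K : Fin m) :
    ∑ k ∈ Finset.Iic K,
        rankDist t (fun i j => (∑ π, detAlloc (A π) i j) / (Nat.factorial n)) k =
      ((∑ π, numTop t (A π) K : ℕ) : ℝ) / (Nat.factorial n) := by
  simp only [rankDist, numTop, detAlloc]
  push_cast
  simp only [← Finset.sum_div]
  congr 1
  rw [Finset.sum_comm (s := Finset.univ) (t := Finset.Iic K)]
  exact Finset.sum_congr rfl fun k _ => Finset.sum_comm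

/-- ABM does not imperfectly rank dominate RSD: in the setting with
6 agents and 6 objects of unit capacity there is a type profile at which `RSD(t)`
strictly rank dominates `ABM(t)`. -/
theorem rsd_strictly_rank_dominates_abm_somewhere :
    ∃ t : Fin 6 → Pref 6,
      StrictRankDom t (RSD (fun _ => 1) t) (ABM (fun _ => 1) t) := by
  have hpos : (0 : ℝ) < (Nat.factorial 6 : ℕ) := by exact_mod_cast Nat.factorial_pos 6
  refine ⟨profile, fun K => ?_, 4, ?_⟩
  · unfold ABM RSD
    rw [sum_rankDist_average, sum_rankDist_average]
    refine div_le_div_of_nonneg_right ?_ hpos.le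
    exact_mod_cast Finset.sum_le_sum fun π _ => numTop_ABMassign_le π K
  · unfold ABM RSD
    rw [sum_rankDist_average, sum_rankDist_average]
    refine div_lt_div_of_pos_right ?_ hpos
    exact_mod_cast Finset.sum_lt_sum (fun π _ => numTop_ABMassign_le π 4)
      ⟨1, Finset.mem_univ _, numTop_ABMassign_lt_one⟩
end

section
/- For any fixed number of objects m ≥ 3 and any ε > 0, there exists q_min ∈ ℕ such that for any setting with m objects, capacity vector q = (q_1,…,q_m) with q_j ≥ q_min for all j ∈ M, and n = Σ_{j∈M} q_j agents, the fraction of type profiles t ∈ T^n at which the allocation RSD(t) is first-choice-maximizing is smaller than ε. -/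
/-!
Write `D j` for the number of agents ranking `j` first, and `D j k` for those ranking `j` first and
`k` second. An allocation can hand out `∑ j, min (D j) (q j)` first choices (`exists_alloc`), so a
first-choice-maximizing lottery `x` must satisfy `∑ x i j = min (D j) (q j)` over the first-choosers
`i` of each `j` (`sum_first_eq`). Hence first-choosers of `k` get `k` for sure if `D k ≤ q k`, and
nobody else gets `k` if `D k ≥ q k`; for `RSD` these properties must hold in every single serial
dictatorship.

They fail as soon as `D ≠ q` and all `D j k` with `j ≠ k` are positive (`not_fcm`). As
`∑ D = n = ∑ q`, some `j` has `D j > q j`. Let first-choosers of `j` exhaust `j`, and then let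
further agents with top choices `j, k` take `k`. If some `k ≠ j` has `D k ≥ q k`, one such agent
suffices. Otherwise `∑ k ≠ j, (D k + D j k) = n > ∑ k ≠ j, q k` yields a `k` with
`D j k > q k - D k`, and since `m ≥ 3` there is a third object with spare capacity, whence also
`D j - q j > q k - D k`. So more than `q k - D k` agents can be diverted to `k`, and a first-chooser
of `k` coming last misses out.

It remains to see that both exceptional events are rare. Missing a pair of top choices has
exponentially small frequency (`missing_card_le`). For `D = q`, choose `u ≠ v` with `q u ≤ q v`;
renaming the first choice of single agents from `v` to `u` shows by double counting that, for
`a < A`, there are at least half as many profiles with `D u = q u + a`, `D v = q v - a` as with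
`a = 0`, if `q u` is large (`shifted_card_le`). These classes are disjoint, so the event has
frequency at most `2 / A`.
-/

open Finset

namespace RSDFirstChoice

/-! ### Single runs of serial dictatorship -/

/-- One step of serial dictatorship: agent `i` takes its favorite available object. -/
def sdStep {n m : ℕ} (t : Fin n → Pref m) (s : (Fin n → Option (Fin m)) × (Fin m → ℕ))
    (i : Fin n) : (Fin n → Option (Fin m)) × (Fin m → ℕ) :=
  match favorite (t i) s.2 with
  | none => s
  | some j => (Function.update s.1 i (some j), Function.update s.2 j (s.2 j - 1))

lemma SDassign_eq {n m : ℕ} (q : Fin m → ℕ) (t : Fin n → Pref m) (π : Equiv.Perm (Fin n)) :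
    SDassign q t π = ((priorityList π).foldl (sdStep t) ((fun _ => none), q)).1 := rfl

lemma sdStep_of_some {n m : ℕ} {t : Fin n → Pref m}
    {s : (Fin n → Option (Fin m)) × (Fin m → ℕ)} {i : Fin n} {j : Fin m}
    (h : favorite (t i) s.2 = some j) :
    sdStep t s i = (Function.update s.1 i (some j), Function.update s.2 j (s.2 j - 1)) := by
  simp [sdStep, h]

lemma sdStep_fst_of_ne {n m : ℕ} {t : Fin n → Pref m}
    {s : (Fin n → Option (Fin m)) × (Fin m → ℕ)} {i i' : Fin n} (h : i' ≠ i) :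
    (sdStep t s i).1 i' = s.1 i' := by
  unfold sdStep
  cases favorite (t i) s.2 <;> simp [h]

lemma foldl_fst_of_not_mem {n m : ℕ} {t : Fin n → Pref m} {i : Fin n} (L : List (Fin n)) :
    ∀ s : (Fin n → Option (Fin m)) × (Fin m → ℕ), i ∉ L →
      (L.foldl (sdStep t) s).1 i = s.1 i := by
  induction L with
  | nil => intro s _; rfl
  | cons a L ih =>
    intro s h
    rw [List.mem_cons, not_or] at h
    rw [List.foldl_cons, ih _ h.2, sdStep_fst_of_ne h.1]

lemma favorite_first {m : ℕ} {p : Pref (m + 3)} {cap : Fin (m + 3) → ℕ} {k : Fin (m + 3)}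
    (h : p 0 = k) (hk : 0 < cap k) : favorite p cap = some k := by
  subst h
  simp [favorite, List.finRange_succ, hk]

lemma favorite_second {m : ℕ} {p : Pref (m + 3)} {cap : Fin (m + 3) → ℕ} {j k : Fin (m + 3)}
    (h0 : p 0 = j) (h1 : p 1 = k) (hj : cap j = 0) (hk : 0 < cap k) :
    favorite p cap = some k := by
  subst h0 h1
  simp [favorite, List.finRange_succ, hk, hj]

lemma favorite_ne {m : ℕ} {p : Pref m} {cap : Fin m → ℕ} {k : Fin m}
    (hk : cap k = 0) : favorite p cap ≠ some k := by
  intro h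
  unfold favorite at h
  rw [Option.map_eq_some_iff] at h
  obtain ⟨a, ha, hak⟩ := h
  have := List.find?_some ha
  simp [hak, hk] at this

lemma run_first {n m : ℕ} {t : Fin n → Pref (m + 3)} {j : Fin (m + 3)} (L : List (Fin n)) :
    ∀ s : (Fin n → Option (Fin (m + 3))) × (Fin (m + 3) → ℕ),
      (∀ a ∈ L, t a 0 = j) → L.length ≤ s.2 j →
      (L.foldl (sdStep t) s).2 j = s.2 j - L.length ∧
        ∀ k, k ≠ j → (L.foldl (sdStep t) s).2 k = s.2 k := by
  induction L with
  | nil => intro s _ _; simp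
  | cons a L ih =>
    intro s h hl
    rw [List.length_cons] at hl
    have hs := sdStep_of_some (s := s) (favorite_first (h a (by simp)) (by omega))
    rw [List.foldl_cons, hs]
    have := ih (Function.update s.1 a (some j), Function.update s.2 j (s.2 j - 1))
      (fun b hb => h b (by simp [hb])) (by simp; omega)
    refine ⟨?_, ?_⟩
    · rw [this.1]; simp; omega
    · intro k hk; rw [this.2 k hk]; simp [hk]

/-- Once `j` is exhausted, agents ranking `k` first, or `j` first and `k` second, all take
copies of `k`. -/
lemma run_second {n m : ℕ} {t : Fin n → Pref (m + 3)} {j k : Fin (m + 3)} (hjk : j ≠ k)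
    (L : List (Fin n)) :
    ∀ s : (Fin n → Option (Fin (m + 3))) × (Fin (m + 3) → ℕ),
      (∀ a ∈ L, t a 0 = k ∨ (t a 0 = j ∧ t a 1 = k)) → s.2 j = 0 → L.length ≤ s.2 k →
      (L.foldl (sdStep t) s).2 j = 0 ∧ (L.foldl (sdStep t) s).2 k = s.2 k - L.length := by
  induction L with
  | nil => intro s _ h _; simp [h]
  | cons a L ih =>
    intro s h hj hl
    rw [List.length_cons] at hl
    have hf : favorite (t a) s.2 = some k := by
      rcases h a (by simp) with h1 | ⟨h1, h2⟩
      · exact favorite_first h1 (by omega)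
      · exact favorite_second h1 h2 hj (by omega)
    rw [List.foldl_cons, sdStep_of_some hf]
    have := ih (Function.update s.1 a (some k), Function.update s.2 k (s.2 k - 1))
      (fun b hb => h b (by simp [hb])) (by simp [hjk, hj]) (by simp; omega)
    refine ⟨this.1, ?_⟩
    rw [this.2]; simp; omega

lemma exists_priorityList {n : ℕ} {L : List (Fin n)} (hL : L.Nodup) :
    ∃ (π : Equiv.Perm (Fin n)) (R : List (Fin n)),
      priorityList π = L ++ R ∧ (L ++ R).Nodup := by
  set R := (List.finRange n).filter (fun a => a ∉ L) with hR
  have hnd : (L ++ R).Nodup := by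
    refine List.Nodup.append hL ((List.nodup_finRange n).filter _) ?_
    intro a ha hb
    simp [hR] at hb
    exact hb ha
  have hmem : ∀ a, a ∈ L ++ R := by
    intro a
    by_cases h : a ∈ L <;> simp [hR, h]
  have hlen : (L ++ R).length = n := by
    have hp : (L ++ R).Perm (List.finRange n) :=
      (List.perm_ext_iff_of_nodup hnd (List.nodup_finRange n)).2 (by simpa using hmem)
    simpa using hp.length_eq
  let f : Fin n → Fin n := fun i => (L ++ R).get (Fin.cast hlen.symm i)
  have hf : Function.Bijective f := by
    rw [Fintype.bijective_iff_injective_and_card]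
    refine ⟨?_, rfl⟩
    intro a b hab
    have := (List.nodup_iff_injective_get.1 hnd) hab
    simpa using this
  refine ⟨(Equiv.ofBijective f hf).symm, R, ?_, hnd⟩
  unfold priorityList
  refine List.ext_getElem (by simp [← hlen]) ?_
  intro i h1 h2
  simp [f]

/-- A serial dictatorship in which the agents of `S₁` exhaust `j`, those of `S₂` then take
copies of `k`, and agent `i` chooses next. -/
lemma exists_run {n m : ℕ} {q : Fin (m + 3) → ℕ} {t : Fin n → Pref (m + 3)}
    {j k : Fin (m + 3)} (hjk : j ≠ k) {S₁ S₂ : Finset (Fin n)} {i : Fin n}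
    (hd : Disjoint S₁ S₂) (hi₁ : i ∉ S₁) (hi₂ : i ∉ S₂)
    (h₁ : ∀ a ∈ S₁, t a 0 = j) (hc₁ : S₁.card = q j)
    (h₂ : ∀ a ∈ S₂, t a 0 = k ∨ (t a 0 = j ∧ t a 1 = k)) (hc₂ : S₂.card ≤ q k) :
    ∃ (π : Equiv.Perm (Fin n)) (cap : Fin (m + 3) → ℕ),
      SDassign q t π i = favorite (t i) cap ∧ cap j = 0 ∧ cap k = q k - S₂.card := by
  have hnd : ((S₁.toList ++ S₂.toList) ++ [i]).Nodup := by
    refine List.Nodup.append (List.Nodup.append S₁.nodup_toList S₂.nodup_toList ?_)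
      (List.nodup_singleton i) ?_
    · intro a ha hb
      rw [Finset.mem_toList] at ha hb
      exact Finset.disjoint_left.1 hd ha hb
    · intro a ha hb
      simp at ha hb
      subst hb
      tauto
  obtain ⟨π, R, hπ, hnd'⟩ := exists_priorityList hnd
  set s := (S₁.toList ++ S₂.toList).foldl (sdStep t) ((fun _ => none), q) with hs
  refine ⟨π, s.2, ?_, ?_⟩
  · have hiR : i ∉ R := by
      intro h
      exact (List.disjoint_of_nodup_append hnd') (a := i) (by simp) h
    have hiL : i ∉ S₁.toList ++ S₂.toList := by simp [hi₁, hi₂]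
    rw [SDassign_eq, hπ, List.foldl_append, foldl_fst_of_not_mem R _ hiR, List.foldl_append,
      ← hs]
    have hn : s.1 i = none := by
      rw [hs, foldl_fst_of_not_mem _ _ hiL]
    simp only [List.foldl_cons, List.foldl_nil, sdStep]
    cases hfav : favorite (t i) s.2 <;> simp [hn]
  · have r1 := run_first (t := t) (j := j) S₁.toList ((fun _ => none), q)
      (by simpa using h₁) (by simp [hc₁])
    have hk1 := r1.2 k hjk.symm
    have hj1 := r1.1
    simp only [Finset.length_toList, hc₁, Nat.sub_self] at hj1
    have r2 := run_second (t := t) hjk S₂.toList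
      (S₁.toList.foldl (sdStep t) ((fun _ => none), q))
      (by simpa using h₂) hj1 (by rw [hk1]; simpa using hc₂)
    rw [hs, List.foldl_append]
    refine ⟨r2.1, ?_⟩
    rw [r2.2, hk1, Finset.length_toList]

/-! ### First-choice-maximizing lotteries -/

/-- The number of agents whose first choice is `j`. -/
def demand {n m : ℕ} (t : Fin n → Pref (m + 3)) (j : Fin (m + 3)) : ℕ :=
  (univ.filter fun i => t i 0 = j).card

/-- The number of agents whose first choice is `j` and whose second choice is `k`. -/
def demand₂ {n m : ℕ} (t : Fin n → Pref (m + 3)) (j k : Fin (m + 3)) : ℕ :=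
  (univ.filter fun i => t i 0 = j ∧ t i 1 = k).card

lemma sum_demand {n m : ℕ} (t : Fin n → Pref (m + 3)) : ∑ j, demand t j = n := by
  have := Finset.card_eq_sum_card_fiberwise (s := (univ : Finset (Fin n)))
    (t := (univ : Finset (Fin (m + 3)))) (f := fun i => t i 0) (by simp)
  simpa [demand] using this.symm

lemma sum_demand₂ {n m : ℕ} (t : Fin n → Pref (m + 3)) (j : Fin (m + 3)) :
    ∑ k, demand₂ t j k = demand t j := by
  have := Finset.card_eq_sum_card_fiberwise (s := univ.filter fun i => t i 0 = j)
    (t := (univ : Finset (Fin (m + 3)))) (f := fun i => t i 1) (by simp)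
  simpa [demand, demand₂, Finset.filter_filter] using this.symm

lemma demand₂_self {n m : ℕ} (t : Fin n → Pref (m + 3)) (j : Fin (m + 3)) :
    demand₂ t j j = 0 := by
  unfold demand₂
  rw [Finset.card_eq_zero, Finset.filter_eq_empty_iff]
  rintro i - ⟨h0, h1⟩
  have := (t i).injective (h0.trans h1.symm)
  simp at this

lemma demand₂_le {n m : ℕ} (t : Fin n → Pref (m + 3)) (j k : Fin (m + 3)) :
    demand₂ t j k ≤ demand t j :=
  Finset.card_le_card fun i hi => by simp at hi ⊢; exact hi.1

lemma d1_eq {n m : ℕ} (t : Fin n → Pref (m + 3)) (x : Fin n → Fin (m + 3) → ℝ) :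
    d1 t x = ∑ i, x i (t i 0) := by
  unfold d1
  refine Finset.sum_congr rfl fun i _ => ?_
  have : ∀ j, (((t i).symm j : Fin (m + 3)) : ℕ) = 0 ↔ t i 0 = j := by
    intro j
    rw [← Equiv.eq_symm_apply, Fin.ext_iff]
    simp [eq_comm]
  simp [this]

lemma sum_by_first {n m : ℕ} (t : Fin n → Pref (m + 3)) (f : Fin n → ℝ) :
    ∑ i, f i = ∑ j, ∑ i ∈ univ.filter (fun i => t i 0 = j), f i :=
  (Finset.sum_fiberwise _ _ _).symm

/-- Some allocation hands out `∑ j, min (demand j) (q j)` first choices: each object is shared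
equally among its first-choosers, and the agents' residual probability is spread over
the objects proportionally to leftover capacity. -/
lemma exists_alloc {n m : ℕ} {q : Fin (m + 3) → ℕ} {t : Fin n → Pref (m + 3)}
    (hn : n = ∑ j, q j) (hne : demand t ≠ q) :
    ∃ y, IsAlloc q y ∧ ∑ j, min (demand t j : ℝ) (q j) ≤ d1 t y := by
  set M : Fin (m + 3) → ℝ := fun j => min (demand t j : ℝ) (q j) with hM
  have hMD : ∀ j, M j ≤ demand t j := fun j => min_le_left _ _
  have hMq : ∀ j, M j ≤ q j := fun j => min_le_right _ _
  have hM0 : ∀ j, 0 ≤ M j := fun j => le_min (by positivity) (by positivity)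
  set R : ℝ := ∑ j, ((q j : ℝ) - M j) with hR
  have hDq : ∑ j, (demand t j : ℝ) = ∑ j, (q j : ℝ) := by
    exact_mod_cast (sum_demand t).trans hn
  have hRpos : 0 < R := by
    by_contra hcon
    have h0 : ∀ j ∈ univ, (q j : ℝ) - M j = 0 := by
      rw [← Finset.sum_eq_zero_iff_of_nonneg (fun j _ => sub_nonneg.2 (hMq j))]
      exact le_antisymm (not_lt.1 hcon) (Finset.sum_nonneg fun j _ => sub_nonneg.2 (hMq j))
    have hle : ∀ j ∈ univ, (q j : ℝ) ≤ demand t j := fun j hj => by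
      linarith [h0 j hj, hMD j]
    apply hne
    funext j
    have := (Finset.sum_eq_sum_iff_of_le hle).1 hDq.symm j (mem_univ j)
    exact_mod_cast this.symm
  set a : Fin n → ℝ := fun i => M (t i 0) / demand t (t i 0) with ha
  have ha0 : ∀ i, 0 ≤ a i := fun i => div_nonneg (hM0 _) (by positivity)
  have ha1 : ∀ i, a i ≤ 1 := fun i => div_le_one_of_le₀ (hMD _) (by positivity)
  have hfib : ∀ j, ∑ i ∈ univ.filter (fun i => t i 0 = j), a i = M j := by
    intro j
    have : ∀ i ∈ univ.filter (fun i => t i 0 = j), a i = M j / demand t j := by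
      intro i hi
      simp only [mem_filter, mem_univ, true_and] at hi
      simp [ha, hi]
    rw [Finset.sum_congr rfl this, Finset.sum_const, nsmul_eq_mul]
    change (demand t j : ℝ) * _ = _
    rcases eq_or_ne (demand t j : ℝ) 0 with h | h
    · have := hMD j
      have := hM0 j
      rw [h]; linarith
    · field_simp
  have hsum : ∑ i, a i = ∑ j, M j := by
    rw [sum_by_first t]
    exact Finset.sum_congr rfl fun j _ => hfib j
  have hres : ∑ i, (1 - a i) = R := by
    rw [Finset.sum_sub_distrib, hsum, hR, Finset.sum_sub_distrib]
    simp [hn]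
  have hfr0 : ∀ j, 0 ≤ ((q j : ℝ) - M j) / R := fun j =>
    div_nonneg (sub_nonneg.2 (hMq j)) hRpos.le
  have hrow : ∀ i, ∑ j, ((if t i 0 = j then a i else 0) + (1 - a i) * (((q j : ℝ) - M j) / R))
      = 1 := by
    intro i
    rw [Finset.sum_add_distrib, ← Finset.mul_sum, ← Finset.sum_div, ← hR,
      div_self hRpos.ne']
    simp
  have hnn : ∀ i j, 0 ≤ (if t i 0 = j then a i else 0) + (1 - a i) * (((q j : ℝ) - M j) / R) := by
    intro i j
    have := mul_nonneg (sub_nonneg.2 (ha1 i)) (hfr0 j)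
    split_ifs
    · linarith [ha0 i]
    · linarith
  refine ⟨fun i j => (if t i 0 = j then a i else 0) + (1 - a i) * (((q j : ℝ) - M j) / R),
    ⟨fun i j => ⟨hnn i j, ?_⟩, hrow, fun j => ?_⟩, ?_⟩
  · refine le_of_le_of_eq ?_ (hrow i)
    exact Finset.single_le_sum (f := fun j => (if t i 0 = j then a i else 0) +
      (1 - a i) * (((q j : ℝ) - M j) / R)) (fun j _ => hnn i j) (mem_univ j)
  · rw [Finset.sum_add_distrib, ← Finset.sum_mul, hres, ← Finset.sum_filter, hfib,
      mul_div_cancel₀ _ hRpos.ne']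
    linarith
  · rw [d1_eq, ← hsum]
    refine Finset.sum_le_sum fun i _ => ?_
    have := mul_nonneg (sub_nonneg.2 (ha1 i)) (hfr0 (t i 0))
    simp only [if_true]
    linarith

/-- A first-choice-maximizing lottery serves as many first-choosers of every single object as
demand and capacity permit. -/
lemma sum_first_eq {n m : ℕ} {q : Fin (m + 3) → ℕ} {t : Fin n → Pref (m + 3)}
    (hn : n = ∑ j, q j) (hne : demand t ≠ q) {x : Fin n → Fin (m + 3) → ℝ}
    (hx : FirstChoiceMax q t x) (j : Fin (m + 3)) :
    ∑ i ∈ univ.filter (fun i => t i 0 = j), x i j = min (demand t j : ℝ) (q j) := by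
  obtain ⟨y, hy, hyd⟩ := exists_alloc hn hne
  have hd := hyd.trans (hx.2 y hy)
  have hxd : d1 t x = ∑ j, ∑ i ∈ univ.filter (fun i => t i 0 = j), x i j := by
    rw [d1_eq, sum_by_first t]
    refine Finset.sum_congr rfl fun j _ => Finset.sum_congr rfl fun i hi => ?_
    simp only [mem_filter, mem_univ, true_and] at hi
    rw [hi]
  rw [hxd] at hd
  have hle : ∀ j ∈ univ, ∑ i ∈ univ.filter (fun i => t i 0 = j), x i j
      ≤ min (demand t j : ℝ) (q j) := by
    intro j _
    refine le_min ?_ ?_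
    · refine (Finset.sum_le_sum (g := fun _ => (1 : ℝ)) fun i _ => (hx.1.1 i j).2).trans ?_
      simp [demand]
    · refine le_trans ?_ (hx.1.2.2 j)
      exact Finset.sum_le_sum_of_subset_of_nonneg (Finset.filter_subset _ _)
        fun i _ _ => (hx.1.1 i j).1
  exact (Finset.sum_eq_sum_iff_of_le hle).1 (le_antisymm (Finset.sum_le_sum hle) hd) j
    (mem_univ j)

lemma eq_one_of_fcm {n m : ℕ} {q : Fin (m + 3) → ℕ} {t : Fin n → Pref (m + 3)}
    (hn : n = ∑ j, q j) (hne : demand t ≠ q) {x : Fin n → Fin (m + 3) → ℝ}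
    (hx : FirstChoiceMax q t x) {i : Fin n} {k : Fin (m + 3)}
    (hk : demand t k ≤ q k) (hi : t i 0 = k) : x i k = 1 := by
  have h := sum_first_eq hn hne hx k
  rw [min_eq_left (by exact_mod_cast hk)] at h
  have h2 : ∑ i ∈ univ.filter (fun i => t i 0 = k), x i k
      = ∑ i ∈ univ.filter (fun i => t i 0 = k), (1 : ℝ) := by
    rw [h]; simp [demand]
  exact (Finset.sum_eq_sum_iff_of_le fun i _ => (hx.1.1 i k).2).1 h2 i (by simp [hi])

lemma eq_zero_of_fcm {n m : ℕ} {q : Fin (m + 3) → ℕ} {t : Fin n → Pref (m + 3)}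
    (hn : n = ∑ j, q j) (hne : demand t ≠ q) {x : Fin n → Fin (m + 3) → ℝ}
    (hx : FirstChoiceMax q t x) {i : Fin n} {k : Fin (m + 3)}
    (hk : q k ≤ demand t k) (hi : t i 0 ≠ k) : x i k = 0 := by
  have h := sum_first_eq hn hne hx k
  rw [min_eq_right (by exact_mod_cast hk)] at h
  have h2 := hx.1.2.2 k
  rw [← Finset.sum_filter_add_sum_filter_not univ (fun i => t i 0 = k), h] at h2
  have h3 : x i k ≤ ∑ i ∈ univ.filter (fun i => ¬ t i 0 = k), x i k :=
    Finset.single_le_sum (f := fun i => x i k) (fun i _ => (hx.1.1 i k).1) (by simp [hi])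
  exact le_antisymm (by linarith) (hx.1.1 i k).1

lemma detAlloc_nonneg {n m : ℕ} (a : Fin n → Option (Fin m)) (i : Fin n) (j : Fin m) :
    0 ≤ detAlloc a i j := by
  unfold detAlloc; split_ifs <;> norm_num

lemma detAlloc_le_one {n m : ℕ} (a : Fin n → Option (Fin m)) (i : Fin n) (j : Fin m) :
    detAlloc a i j ≤ 1 := by
  unfold detAlloc; split_ifs <;> norm_num

lemma SDassign_of_RSD_one {n m : ℕ} {q : Fin m → ℕ} {t : Fin n → Pref m} {i : Fin n}
    {k : Fin m} (h : RSD q t i k = 1) (π : Equiv.Perm (Fin n)) :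
    SDassign q t π i = some k := by
  unfold RSD at h
  rw [div_eq_one_iff_eq (by positivity)] at h
  have h2 : ∑ π : Equiv.Perm (Fin n), detAlloc (SDassign q t π) i k
      = ∑ _π : Equiv.Perm (Fin n), (1 : ℝ) := by
    rw [h]; simp [Fintype.card_perm]
  have := (Finset.sum_eq_sum_iff_of_le fun π _ => detAlloc_le_one _ i k).1 h2 π (mem_univ π)
  unfold detAlloc at this
  by_contra hcon
  simp [hcon] at this

lemma SDassign_of_RSD_zero {n m : ℕ} {q : Fin m → ℕ} {t : Fin n → Pref m} {i : Fin n}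
    {k : Fin m} (h : RSD q t i k = 0) (π : Equiv.Perm (Fin n)) :
    SDassign q t π i ≠ some k := by
  intro hcon
  unfold RSD at h
  rw [div_eq_zero_iff] at h
  have h1 := h.resolve_right (by positivity)
  have := (Finset.sum_eq_zero_iff_of_nonneg fun π _ => detAlloc_nonneg _ i k).1 h1 π (mem_univ π)
  simp [detAlloc, hcon] at this

/-- If all pairs of first and second choices occur and demand differs from capacity, then `RSD`
is not first-choice-maximizing. -/
lemma not_fcm {n m : ℕ} {q : Fin (m + 3) → ℕ} {t : Fin n → Pref (m + 3)}
    (hn : n = ∑ j, q j) (hq : ∀ j, 0 < q j) (hne : demand t ≠ q)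
    (hpair : ∀ j k, j ≠ k → 0 < demand₂ t j k) :
    ¬ FirstChoiceMax q t (RSD q t) := by
  intro hx
  have hDq : ∑ j, demand t j = ∑ j, q j := (sum_demand t).trans hn
  obtain ⟨j, hj⟩ : ∃ j, q j < demand t j := by
    by_contra! hcon
    exact hne (funext fun j =>
      (Finset.sum_eq_sum_iff_of_le fun j _ => hcon j).1 hDq j (mem_univ j))
  by_cases hex : ∃ k, k ≠ j ∧ q k ≤ demand t k
    -- A rejected first-chooser of `j` can take a copy of `k`, although the first-choosers of `k`
    -- suffice to use up its capacity.
  · obtain ⟨k, hkj, hk⟩ := hex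
    obtain ⟨i, hi⟩ := Finset.card_pos.1 (hpair j k hkj.symm)
    simp only [mem_filter, mem_univ, true_and] at hi
    obtain ⟨S, hS, hSc⟩ := Finset.exists_subset_card_eq
      (s := (univ.filter fun i => t i 0 = j).erase i) (n := q j)
      (by
        rw [Finset.card_erase_of_mem (by simp [hi.1])]
        unfold demand at hj
        omega)
    obtain ⟨π, cap, hπ, hcj, hck⟩ := exists_run (q := q) (t := t) (S₂ := ∅) (i := i) hkj.symm
      (Finset.disjoint_empty_right S) (fun h => by simpa using hS h) (by simp)
      (fun a ha => by have := hS ha; simp at this; exact this.2) hSc (by simp) (by simp)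
    refine SDassign_of_RSD_zero (eq_zero_of_fcm hn hne hx hk (i := i) ?_) π ?_
    · rw [hi.1]; exact hkj.symm
    · rw [hπ]
      refine favorite_second hi.1 hi.2 hcj ?_
      have := hq k
      simp at hck
      omega
  · push Not at hex
    -- Each agent counts exactly once in `∑ k ≠ j, (demand t k + demand₂ t j k)`, so this sum is
    -- `n`, which exceeds the total capacity of the objects other than `j`.
    obtain ⟨k, hkj, hk⟩ : ∃ k, k ≠ j ∧ q k < demand t k + demand₂ t j k := by
      by_contra! hcon
      have h1 : ∑ k ∈ univ.erase j, (demand t k + demand₂ t j k) ≤ ∑ k ∈ univ.erase j, q k :=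
        Finset.sum_le_sum fun k hk => hcon k (Finset.ne_of_mem_erase hk)
      have h2 := sum_demand₂ t j
      rw [Finset.sum_add_distrib] at h1
      rw [← Finset.add_sum_erase _ _ (mem_univ j), demand₂_self] at h2
      rw [← Finset.add_sum_erase _ _ (mem_univ j), ← Finset.add_sum_erase _ _ (mem_univ j)] at hDq
      have := hq j
      omega
    have hDk := hex k hkj
    -- A third object with spare capacity makes the overflow of `j` exceed the slack at `k`.
    have hover : q k - demand t k < demand t j - q j := by
      obtain ⟨l, hlj, hlk⟩ : ∃ l : Fin (m + 3), l ≠ j ∧ l ≠ k := by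
        have : ({j, k} : Finset (Fin (m + 3))).card < Fintype.card (Fin (m + 3)) := by
          have := Finset.card_le_two (a := j) (b := k)
          simp only [Fintype.card_fin]; omega
        obtain ⟨l, hl⟩ := Finset.exists_mem_notMem_of_card_lt_card
          (s := ({j, k} : Finset (Fin (m + 3)))) (t := univ) (by simpa using this)
        simp at hl
        exact ⟨l, hl⟩
      have h1 : ∑ a ∈ (univ.erase j).erase k, demand t a < ∑ a ∈ (univ.erase j).erase k, q a := by
        refine Finset.sum_lt_sum (fun a ha => ?_) ⟨l, by simp [hlj, hlk], hex l hlj⟩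
        simp at ha
        exact (hex a ha.2).le
      have hkm : k ∈ univ.erase j := by simp [hkj]
      rw [← Finset.add_sum_erase _ _ (mem_univ j), ← Finset.add_sum_erase _ _ (mem_univ j),
        ← Finset.add_sum_erase _ _ hkm, ← Finset.add_sum_erase _ _ hkm] at hDq
      omega
    have hDkpos : 0 < demand t k := (hpair k j hkj).trans_le (demand₂_le t k j)
    obtain ⟨i, hi⟩ := Finset.card_pos.1 hDkpos
    simp only [mem_filter, mem_univ, true_and] at hi
    obtain ⟨B, hB, hBc⟩ := Finset.exists_subset_card_eq
      (s := univ.filter fun i => t i 0 = j ∧ t i 1 = k) (n := q k - demand t k + 1)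
      (by unfold demand₂ at hk; omega)
    have hB' : ∀ a ∈ B, t a 0 = j ∧ t a 1 = k := fun a ha => by simpa using hB ha
    have hBA : B ⊆ univ.filter fun i => t i 0 = j := fun a ha => by simp [(hB' a ha).1]
    obtain ⟨S, hS, hSc⟩ := Finset.exists_subset_card_eq
      (s := (univ.filter fun i => t i 0 = j) \ B) (n := q j)
      (by
        rw [Finset.card_sdiff_of_subset hBA, hBc]
        change q j ≤ demand t j - _
        omega)
    have hS' : ∀ a ∈ S, t a 0 = j ∧ a ∉ B := fun a ha => by simpa using hS ha
    have hC : ∀ a ∈ (univ.filter fun a => t a 0 = k).erase i, t a 0 = k := fun a ha => by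
      simp at ha; exact ha.2
    have hcard : (B ∪ (univ.filter fun a => t a 0 = k).erase i).card = q k := by
      rw [Finset.card_union_of_disjoint, hBc, Finset.card_erase_of_mem (by simp [hi])]
      · change _ + (demand t k - 1) = _
        omega
      · rw [Finset.disjoint_left]
        intro a ha hb
        exact hkj ((hC a hb).symm.trans (hB' a ha).1)
    obtain ⟨π, cap, hπ, hcj, hck⟩ := exists_run (q := q) (t := t) (i := i) (j := j) (k := k)
      (S₁ := S) (S₂ := B ∪ (univ.filter fun a => t a 0 = k).erase i) hkj.symm
      (by
        rw [Finset.disjoint_left]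
        intro a ha hb
        rcases Finset.mem_union.1 hb with hb | hb
        · exact (hS' a ha).2 hb
        · exact hkj ((hC a hb).symm.trans (hS' a ha).1))
      (fun h => hkj (hi.symm.trans (hS' i h).1))
      (by
        intro h
        rcases Finset.mem_union.1 h with hb | hb
        · exact hkj (hi.symm.trans (hB' i hb).1)
        · simp at hb)
      (fun a ha => (hS' a ha).1) hSc
      (by
        intro a ha
        rcases Finset.mem_union.1 ha with hb | hb
        · exact Or.inr (hB' a hb)
        · exact Or.inl (hC a hb))
      hcard.le
    have h1 := SDassign_of_RSD_one (eq_one_of_fcm hn hne hx hDk.le hi) π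
    rw [hπ] at h1
    exact favorite_ne (by omega) h1

/-! ### Counting profiles with exactly balanced demand -/

/-- The profiles at which the demand for `u` is `b + a` and the demand for `v` is `c - a`. -/
def shifted {n m : ℕ} (u v : Fin (m + 3)) (b c a : ℕ) : Finset (Fin n → Pref (m + 3)) :=
  univ.filter fun t => demand t u = b + a ∧ demand t v + a = c

/-- The ranking with the names of `u` and `v` exchanged. -/
def flip {m : ℕ} (u v : Fin (m + 3)) (p : Pref (m + 3)) : Pref (m + 3) :=
  p.trans (Equiv.swap u v)

lemma flip_flip {m : ℕ} (u v : Fin (m + 3)) (p : Pref (m + 3)) : flip u v (flip u v p) = p := by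
  ext; simp [flip]

lemma demand_update {n m : ℕ} {u v : Fin (m + 3)} (huv : u ≠ v) {t : Fin n → Pref (m + 3)}
    {i : Fin n} (hi : t i 0 = v) :
    demand (Function.update t i (flip u v (t i))) u = demand t u + 1 ∧
      demand (Function.update t i (flip u v (t i))) v + 1 = demand t v := by
  have hv : ∀ a, Function.update t i (flip u v (t i)) a 0 = if a = i then u else t a 0 := by
    intro a
    by_cases h : a = i
    · subst h; simp [flip, hi]
    · simp [h]
  unfold demand
  simp only [hv]
  constructor
  · rw [← Finset.card_insert_of_notMem (a := i) (by simp [hi, huv.symm])]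
    congr 1
    ext a
    by_cases h : a = i <;> simp [h]
  · rw [← Finset.card_erase_add_one (a := i) (s := univ.filter fun a => t a 0 = v)
      (by simp [hi])]
    congr 2
    ext a
    by_cases h : a = i <;> simp [h, huv]

/-- Double counting of the pairs of profiles differing by one flip of an agent from `v` to `u`. -/
lemma shifted_step {n m : ℕ} {u v : Fin (m + 3)} (huv : u ≠ v) (b c a : ℕ) :
    (shifted (n := n) u v b c a).card * (c - a)
      ≤ (shifted (n := n) u v b c (a + 1)).card * (b + a + 1) := by
  classical
  refine Finset.card_mul_le_card_mul
    (fun t t' => ∃ i, t i 0 = v ∧ t' = Function.update t i (flip u v (t i))) ?_ ?_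
  · intro t ht
    simp only [shifted, mem_filter, mem_univ, true_and] at ht
    have hc : (univ.filter fun i => t i 0 = v).card = c - a := by
      change demand t v = _
      omega
    rw [← hc]
    refine Finset.card_le_card_of_injOn (fun i => Function.update t i (flip u v (t i))) ?_ ?_
    · intro i hi
      simp at hi
      have := demand_update huv hi
      simp only [Finset.mem_coe, Finset.mem_bipartiteAbove, shifted, mem_filter, mem_univ,
        true_and]
      exact ⟨⟨by omega, by omega⟩, i, hi, rfl⟩
    · intro i hi i' hi' h
      simp at hi hi'
      by_contra hne
      have := congrArg (fun p : Pref (m + 3) => p 0) (congrFun h i)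
      simp [hne, flip, hi, huv] at this
  · intro t' ht'
    simp only [shifted, mem_filter, mem_univ, true_and] at ht'
    have hc : (univ.filter fun i => t' i 0 = u).card = b + a + 1 := ht'.1
    rw [← hc]
    refine (Finset.card_le_card (t := (univ.filter fun i => t' i 0 = u).image
      fun i => Function.update t' i (flip u v (t' i))) ?_).trans Finset.card_image_le
    intro t ht
    simp only [Finset.mem_bipartiteBelow] at ht
    obtain ⟨-, i, hi, rfl⟩ := ht
    simp only [mem_image, mem_filter, mem_univ, true_and]
    exact ⟨i, by simp [flip, hi], by simp [flip_flip]⟩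

/-- Shifting demand by up to `A` units changes the number of profiles by at most a factor `2`,
and the classes so obtained are disjoint, so the unshifted one is small. -/
lemma shifted_card_le {n m : ℕ} {u v : Fin (m + 3)} (huv : u ≠ v) {b c A : ℕ} (hA : 0 < A)
    (hb : 4 * A ^ 2 ≤ b) (hbc : b ≤ c) :
    (A : ℝ) * (shifted (n := n) u v b c 0).card ≤ 2 * (Fintype.card (Fin n → Pref (m + 3)) : ℝ) := by
  classical
  set E : ℕ → ℝ := fun a => ((shifted (n := n) u v b c a).card : ℝ) with hE
  have hA1 : (1 : ℝ) ≤ A := by exact_mod_cast hA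
  have hbR : 4 * (A : ℝ) ^ 2 ≤ b := by exact_mod_cast hb
  have hbcR : (b : ℝ) ≤ c := by exact_mod_cast hbc
  have hE0 : ∀ a, 0 ≤ E a := fun a => by positivity
  have key : ∀ a, a ≤ A → (1 - a / (2 * A)) * E 0 ≤ E a := by
    intro a
    induction a with
    | zero => intro _; simp
    | succ a ih =>
      intro ha
      have ih := ih (by omega)
      have haA : (a : ℝ) + 1 ≤ A := by exact_mod_cast ha
      have ha0 : (0 : ℝ) ≤ a := by positivity
      have hac : a ≤ c := by nlinarith
      have hs : E a * ((c : ℝ) - a) ≤ E (a + 1) * ((b : ℝ) + a + 1) := by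
        have := shifted_step (n := n) huv b c a
        rw [← Nat.cast_sub hac]
        simp only [hE]
        exact_mod_cast this
      have hδ : 0 < 1 / (2 * (A : ℝ)) := by positivity
      have hfac : (1 - 1 / (2 * (A : ℝ))) * ((b : ℝ) + a + 1) ≤ c - a := by
        have h1 : 2 * (A : ℝ) ≤ 1 / (2 * (A : ℝ)) * b := by
          rw [div_mul_eq_mul_div, le_div_iff₀ (by positivity)]
          nlinarith
        have h2 : 0 ≤ 1 / (2 * (A : ℝ)) * (a + 1) := by positivity
        nlinarith
      have h3 : (1 - 1 / (2 * (A : ℝ))) * E a ≤ E (a + 1) := by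
        have hp : (0 : ℝ) < (b : ℝ) + a + 1 := by positivity
        refine le_of_mul_le_mul_right ?_ hp
        have := mul_le_mul_of_nonneg_left hfac (hE0 a)
        linarith
      have hδ1 : 1 / (2 * (A : ℝ)) ≤ 1 := by
        rw [div_le_one (by positivity)]; linarith
      have h4 := mul_le_mul_of_nonneg_left ih (sub_nonneg.2 hδ1)
      have h5 : 0 ≤ 1 / (2 * (A : ℝ)) * (a / (2 * A)) * E 0 :=
        mul_nonneg (by positivity) (hE0 0)
      have h6 : (1 - ((a + 1 : ℕ) : ℝ) / (2 * A)) * E 0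
          = (1 - 1 / (2 * (A : ℝ))) * ((1 - a / (2 * A)) * E 0)
            - 1 / (2 * (A : ℝ)) * (a / (2 * A)) * E 0 := by
        push_cast; ring
      linarith
  have hhalf : ∀ a ∈ range A, E 0 / 2 ≤ E a := by
    intro a ha
    have haA : a ≤ A := (mem_range.1 ha).le
    refine le_trans ?_ (key a haA)
    have : (a : ℝ) / (2 * A) ≤ 1 / 2 := by
      rw [div_le_div_iff₀ (by positivity) (by norm_num)]
      have : (a : ℝ) ≤ A := by exact_mod_cast haA
      linarith
    nlinarith [hE0 0]
  have hsum : ∑ a ∈ range A, E a ≤ (Fintype.card (Fin n → Pref (m + 3)) : ℝ) := by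
    simp only [hE]
    rw [← Nat.cast_sum, ← Finset.card_biUnion]
    · exact_mod_cast Finset.card_le_univ _
    · intro x _ y _ hxy
      rw [Function.onFun, Finset.disjoint_left]
      intro t h1 h2
      simp only [shifted, mem_filter, mem_univ, true_and] at h1 h2
      omega
  have := (Finset.sum_le_sum hhalf).trans hsum
  rw [Finset.sum_const, card_range, nsmul_eq_mul] at this
  change (A : ℝ) * E 0 ≤ _
  linarith

lemma balanced_card_le {n m : ℕ} {q : Fin (m + 3) → ℕ} {A : ℕ} (hA : 0 < A)
    (hq : ∀ j, 4 * A ^ 2 ≤ q j) :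
    (A : ℝ) * (univ.filter fun t : Fin n → Pref (m + 3) => demand t = q).card
      ≤ 2 * (Fintype.card (Fin n → Pref (m + 3)) : ℝ) := by
  have h01 : (0 : Fin (m + 3)) ≠ 1 := by simp
  have main : ∀ u v : Fin (m + 3), u ≠ v → q u ≤ q v →
      (A : ℝ) * (univ.filter fun t : Fin n → Pref (m + 3) => demand t = q).card
        ≤ 2 * (Fintype.card (Fin n → Pref (m + 3)) : ℝ) := by
    intro u v huv hle
    refine le_trans ?_ (shifted_card_le (n := n) huv hA (hq u) hle)
    refine mul_le_mul_of_nonneg_left ?_ (by positivity)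
    norm_cast
    refine Finset.card_le_card fun t ht => ?_
    simp only [mem_filter, mem_univ, true_and] at ht
    simp [shifted, ht]
  rcases le_total (q 0) (q 1) with h | h
  · exact main 0 1 h01 h
  · exact main 1 0 h01.symm h

/-! ### Counting profiles that miss a pair of top choices -/

lemma exists_pref {m : ℕ} {j k : Fin (m + 3)} (hjk : j ≠ k) :
    ∃ p : Pref (m + 3), p 0 = j ∧ p 1 = k := by
  refine ⟨(Equiv.swap 0 j).trans (Equiv.swap (Equiv.swap 0 j 1) k), ?_, by simp⟩
  have h : j ≠ Equiv.swap 0 j 1 := by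
    intro h
    have h' : Equiv.swap 0 j 0 = Equiv.swap 0 j 1 := by rwa [Equiv.swap_apply_left]
    have := (Equiv.swap 0 j).injective h'
    simp at this
  simp [Equiv.swap_apply_of_ne_of_ne h hjk]

lemma missing_card_le {n m : ℕ} {j k : Fin (m + 3)} (hjk : j ≠ k) :
    (univ.filter fun t : Fin n → Pref (m + 3) => demand₂ t j k = 0).card
      ≤ (Fintype.card (Pref (m + 3)) - 1) ^ n := by
  classical
  obtain ⟨p, hp0, hp1⟩ := exists_pref hjk
  have hsub : (univ.filter fun t : Fin n → Pref (m + 3) => demand₂ t j k = 0)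
      ⊆ Fintype.piFinset fun _ : Fin n => (univ.erase p : Finset (Pref (m + 3))) := by
    intro t ht
    simp only [mem_filter, mem_univ, true_and, demand₂, Finset.card_eq_zero,
      Finset.filter_eq_empty_iff] at ht
    simp only [Fintype.mem_piFinset, mem_erase, mem_univ, and_true]
    intro i hi
    exact ht trivial (by rw [hi]; exact ⟨hp0, hp1⟩)
  refine (Finset.card_le_card hsub).trans ?_
  rw [Fintype.card_piFinset]
  simp [Finset.card_erase_of_mem, Finset.card_univ]

lemma fcm_card_le {n m : ℕ} {q : Fin (m + 3) → ℕ} (hn : n = ∑ j, q j) (hq : ∀ j, 0 < q j) :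
    Nat.card {t : Fin n → Pref (m + 3) // FirstChoiceMax q t (RSD q t)}
      ≤ (univ.filter fun t : Fin n → Pref (m + 3) => demand t = q).card
        + (m + 3) ^ 2 * (Fintype.card (Pref (m + 3)) - 1) ^ n := by
  classical
  rw [Nat.card_eq_fintype_card, Fintype.card_subtype]
  set P : Finset (Fin (m + 3) × Fin (m + 3)) := univ.filter fun x => x.1 ≠ x.2 with hP
  have hsub : (univ.filter fun t : Fin n → Pref (m + 3) => FirstChoiceMax q t (RSD q t))
      ⊆ (univ.filter fun t : Fin n → Pref (m + 3) => demand t = q) ∪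
        P.biUnion fun x => univ.filter fun t : Fin n → Pref (m + 3) => demand₂ t x.1 x.2 = 0 := by
    intro t ht
    simp only [mem_filter, mem_univ, true_and] at ht
    by_contra hcon
    simp only [mem_union, mem_biUnion, mem_filter, mem_univ, true_and, hP, not_or,
      not_exists, not_and] at hcon
    exact not_fcm hn hq hcon.1 (fun j k hjk => Nat.pos_of_ne_zero (hcon.2 (j, k) hjk)) ht
  refine (Finset.card_le_card hsub).trans ((Finset.card_union_le _ _).trans ?_)
  refine Nat.add_le_add_left ?_ _
  refine (Finset.card_biUnion_le_card_mul _ _ _ fun x hx => missing_card_le ?_).trans ?_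
  · simpa [hP] using hx
  · refine Nat.mul_le_mul_right _ ((Finset.card_le_univ P).trans ?_)
    simp [sq]

end RSDFirstChoice

/-- for any fixed `m ≥ 3` and `ε > 0` there is `q_min` such that for
any capacities `q_j ≥ q_min` and `n = ∑ q_j` agents, the fraction of type profiles
at which `RSD(t)` is first-choice-maximizing is smaller than `ε`. -/
theorem rsd_rarely_fcm_school_choice (m : ℕ) (hm : 3 ≤ m) (ε : ℝ) (hε : 0 < ε) :
    ∃ qmin : ℕ, ∀ q : Fin m → ℕ, (∀ j, qmin ≤ q j) →
      ∀ n : ℕ, n = ∑ j, q j →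
      (Nat.card {t : Fin n → Pref m // FirstChoiceMax q t (RSD q t)} : ℝ)
        < ε * (Nat.card (Fin n → Pref m) : ℝ) := by
  obtain ⟨m, rfl⟩ : ∃ k, m = k + 3 := ⟨m - 3, by omega⟩
  set M := Fintype.card (Pref (m + 3)) with hM
  have hMpos : 0 < M := Fintype.card_pos
  have hMR : (0 : ℝ) < M := by exact_mod_cast hMpos
  have hlim : Filter.Tendsto (fun n : ℕ => ((m + 3 : ℕ) : ℝ) ^ 2 * (((M : ℝ) - 1) / M) ^ n)
      Filter.atTop (nhds (((m + 3 : ℕ) : ℝ) ^ 2 * 0)) := by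
    refine (tendsto_pow_atTop_nhds_zero_of_lt_one ?_ ?_).const_mul _
    · have : (1 : ℝ) ≤ M := by exact_mod_cast hMpos
      exact div_nonneg (by linarith) hMR.le
    · rw [div_lt_one hMR]; linarith
  rw [mul_zero] at hlim
  obtain ⟨N, hN⟩ := Filter.eventually_atTop.1 (hlim.eventually_lt_const (half_pos hε))
  obtain ⟨A, hA⟩ := exists_nat_gt (4 / ε)
  have hApos : 0 < A := by
    have : (0 : ℝ) < A := lt_trans (by positivity) hA
    exact_mod_cast this
  have hAR : (0 : ℝ) < A := by exact_mod_cast hApos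
  refine ⟨max N (4 * A ^ 2), fun q hq n hn => ?_⟩
  have hqA : ∀ j, 4 * A ^ 2 ≤ q j := fun j => (le_max_right _ _).trans (hq j)
  have hnN : N ≤ n := by
    rw [hn]
    exact ((le_max_left _ _).trans (hq 0)).trans
      (Finset.single_le_sum (f := q) (fun _ _ => Nat.zero_le _) (mem_univ 0))
  have hcard : (Nat.card (Fin n → Pref (m + 3)) : ℝ) = (M : ℝ) ^ n := by
    simp [Nat.card_eq_fintype_card, hM]
  have hpos : (0 : ℝ) < (M : ℝ) ^ n := by positivity
  have h1 := RSDFirstChoice.fcm_card_le hn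
    (fun j => lt_of_lt_of_le (by positivity) (hqA j))
  have h2 := RSDFirstChoice.balanced_card_le (n := n) hApos hqA
  rw [← Nat.card_eq_fintype_card, hcard] at h2
  set B := (univ.filter fun t : Fin n → Pref (m + 3) => RSDFirstChoice.demand t = q).card
  have h1R : (Nat.card {t : Fin n → Pref (m + 3) // FirstChoiceMax q t (RSD q t)} : ℝ)
      ≤ B + ((m + 3 : ℕ) : ℝ) ^ 2 * ((M : ℝ) - 1) ^ n := by
    have h := (Nat.cast_le (α := ℝ)).2 h1
    rw [← hM] at h
    push_cast [Nat.cast_sub hMpos] at h ⊢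
    exact h
  have h3 : ((m + 3 : ℕ) : ℝ) ^ 2 * ((M : ℝ) - 1) ^ n < ε / 2 * (M : ℝ) ^ n := by
    have := hN n hnN
    rwa [div_pow, mul_div_assoc', div_lt_iff₀ hpos] at this
  have h4 : (B : ℝ) ≤ ε / 2 * (M : ℝ) ^ n := by
    rw [div_lt_iff₀ hε] at hA
    refine le_of_mul_le_mul_left ?_ hAR
    nlinarith
  rw [hcard]
  linarith
end
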